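/- Let n be a positive odd integer and let M = (n-1)/2 or M = n-1. Then, modulo [n]*Phi_n(q)^4, the sum S = sum_{k=0}^{M} (-1)^k [4k+1] ((q;q^2)_k^4 (q^2;q^4)_k / ((q^2;q^2)_k^4 (q^4;q^4)_k)) q^k satisfies: if n ≡ 1 (mod 4), S ≡ [n] * ((q^2;q^4)_{(n-1)/4}^2 / (q^4;q^4)_{(n-1)/4}^2) * ( 1 + [n]^2 * sum_{j=1}^{(n-1)/2} (-1)^{j+1} q^{2j-n} / [2j]^2 ); and if n ≡ 3 (mod 4), S ≡ [n]^2 q^{(1-n)/2} (q^3;q^4)_{(n-1)/2} / (q^5;q^4)_{(n-1)/2}. -/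

import Mathlib

open Finset

/-- The generator `q` of the field `ℚ(q)` of rational functions. -/
noncomputable def q : RatFunc ℚ := RatFunc.X

/-- The `q`-integer `[r] = (1 - q^r)/(1 - q)`. -/
noncomputable def qint (r : ℤ) : RatFunc ℚ := (1 - q ^ r) / (1 - q)

/-- The `q`-shifted factorial `(x; b)_m = (1-x)(1-xb)⋯(1-x b^(m-1))`. -/
noncomputable def qpoch (x b : RatFunc ℚ) (m : ℕ) : RatFunc ℚ :=
  ∏ i ∈ Finset.range m, (1 - x * b ^ i)

/-- `f ≡ g (mod P)`: `f - g = P * (r/s)` with `s` coprime to `P`. -/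
def qcong (f g : RatFunc ℚ) (P : Polynomial ℚ) : Prop :=
  ∃ r s : Polynomial ℚ, IsCoprime s P ∧
    f - g = algebraMap (Polynomial ℚ) (RatFunc ℚ) P *
      (algebraMap (Polynomial ℚ) (RatFunc ℚ) r / algebraMap (Polynomial ℚ) (RatFunc ℚ) s)


/-- general q-Pochhammer -/
def pc {F : Type*} [Field F] (p x : F) (k : ℕ) : F := ∏ i ∈ range k, (1 - x * p ^ i)

lemma pc_zero {F : Type*} [Field F] (p x : F) : pc p x 0 = 1 := by simp [pc]
lemma pc_succ {F : Type*} [Field F] (p x : F) (k : ℕ) :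
    pc p x (k+1) = pc p x k * (1 - x * p ^ k) := by simp [pc, prod_range_succ]
lemma pc_succ' {F : Type*} [Field F] (p x : F) (k : ℕ) :
    pc p x (k+1) = (1 - x) * pc p (x * p) k := by
  simp only [pc, prod_range_succ', pow_zero, mul_one]
  rw [mul_comm]; congr 1; apply prod_congr rfl; intros; ring
lemma pc_shift {F : Type*} [Field F] (p x : F) (k : ℕ) :
    pc p x k * (1 - x * p ^ k) = (1 - x) * pc p (x * p) k := by
  rw [← pc_succ, pc_succ']
lemma pc_ne {F : Type*} [Field F] (p x : F) (k : ℕ) (h : ∀ i, i < k → 1 - x * p ^ i ≠ 0) :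
    pc p x k ≠ 0 := by
  unfold pc; rw [prod_ne_zero_iff]; intro i hi; exact h i (by simpa using hi)

lemma alg_step {F : Type*} [Field F] (p a v P K A1 A2 B1 B2 D1 D2 E V S : F)
    (hp : p ≠ 0) (hP : P ≠ 0) (h1 : 1 - a ≠ 0) (h2 : 1 + a ≠ 0) (h3 : 1 - a * p ≠ 0)
    (h4 : 1 - p * P * K ≠ 0) (h4' : 1 - p * p * P * K ≠ 0)
    (h5 : p * P - 1 ≠ 0) (hA2 : A2 ≠ 0) (hD1 : D1 ≠ 0) (hD2 : D2 ≠ 0)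
    (h6 : 1 - p ^ 2 * K ^ 2 ≠ 0) (h7 : 1 - a * p ^ 3 * P * K ≠ 0) (h8 : P - a * K ≠ 0)
    (h9 : 1 - a * p * P ≠ 0) (h10 : 1 - a * p ^ 2 * P ≠ 0)
    (h11 : 1 - a * p * P * K ≠ 0) (h12 : 1 - a * p ^ 2 * P * K ≠ 0) :
    (1 - a * p * K ^ 2) / (1 - a * p) * (A1 * (1 - a ^ 2 * K ^ 2) / (1 - a ^ 2)) / A2
        * (B1 * B2 / (D1 * D2)) * (S * K) * V
        * (E * (1 - a * v * (p * P) + a ^ 2 * p * (p * P) ^ 2))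
     - (1 - a * p * P) * (1 - a * p ^ 2 * P) / ((1 - a) * (1 - a * p)) *
      ((1 - a * K ^ 2) / (1 - a) * A1 / A2
        * ((B1 * (1 - K / (p * P)) / (1 - 1 / (p * P))) * (B2 * (1 - p * P) / (1 - p * P * K)) /
          ((D1 * (1 - a * p * P) * (1 - a * p ^ 2 * P) /
            ((1 - a * p * P * K) * (1 - a * p ^ 2 * P * K))) * D2)) * S * V
        * ((1 - a * v * K + a ^ 2 * p * K ^ 2) * E)) =
    (A1 * (1 - a ^ 2 * K ^ 2)) / (A2 * (1 - p ^ 2 * K ^ 2)) *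
      ((B1 * (1 - K / (p * P))) * (B2 * (1 - p * p * P * K)) /
        ((D1 * (1 - a * p ^ 3 * P * K)) * (D2 * (1 - a * K / P)))) * (S * (-a)) *
        (V * (1 - v * K + p * K ^ 2)) * E *
       (-(p * P) * (1 - (p * K) ^ 2) * (1 - a ^ 2 * p * P * (p * K)) * (1 - a * (p * K) / (p * P)) *
        (1 - a * p ^ 2 * P * (p * K)) /
          ((1 + a) * (1 - a) ^ 2 * (1 - a * p) * (1 - p * P * (p * K))))
    - A1 / A2 * (B1 * B2 / (D1 * D2)) * S * V * ((1 - a * v * K + a ^ 2 * p * K ^ 2) * E) *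
       (-(p * P) * (1 - K ^ 2) * (1 - a ^ 2 * p * P * K) * (1 - a * K / (p * P)) *
        (1 - a * p ^ 2 * P * K) / ((1 + a) * (1 - a) ^ 2 * (1 - a * p) * (1 - p * P * K))) := by
  have e1 : (1 - a ^ 2) = (1 - a) * (1 + a) := by ring
  have e2 : (1 : F) - 1 / (p * P) = (p * P - 1) / (p * P) := by field_simp
  have e3 : (1 : F) - K / (p * P) = (p * P - K) / (p * P) := by field_simp
  have e4 : (1 : F) - a * K / (p * P) = (p * P - a * K) / (p * P) := by field_simp
  have e5 : (1 : F) - a * K / P = (P - a * K) / P := by field_simp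
  have e6 : (1 : F) - a * (p * K) / (p * P) = (P - a * K) / P := by field_simp
  have e7 : (1 - p * P * (p * K)) = 1 - p * p * P * K := by ring
  have e8 : (1 : F) - p * P = - (p * P - 1) := by ring
  have e9 : 1 - (p * K) ^ 2 = 1 - p ^ 2 * K ^ 2 := by ring
  have e10 : 1 - a * p ^ 2 * P * (p * K) = 1 - a * p ^ 3 * P * K := by ring
  rw [e1, e2, e3, e4, e5, e6, e7, e8, e9, e10]
  generalize hw1 : 1 - a = w1 at *
  generalize hw2 : 1 + a = w2 at *
  generalize hw3 : 1 - a * p = w3 at *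
  generalize hw4 : 1 - p * P * K = w4 at *
  generalize hw5 : 1 - p * p * P * K = w5 at *
  generalize hw6 : p * P - 1 = w6 at *
  generalize hw7 : 1 - p ^ 2 * K ^ 2 = w7 at *
  generalize hw8 : 1 - a * p ^ 3 * P * K = w8 at *
  generalize hw9 : P - a * K = w9 at *
  generalize hw10 : 1 - a * p * P = w10 at *
  generalize hw11 : 1 - a * p ^ 2 * P = w11 at *
  generalize hw12 : 1 - a * p * P * K = w12 at *
  generalize hw13 : 1 - a * p ^ 2 * P * K = w13 at *
  clear e1 e2 e3 e4 e5 e6 e7 e8 e9 e10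
  field_simp
  subst hw1 hw2 hw3 hw4 hw5 hw6 hw7 hw8 hw9 hw10 hw11 hw12 hw13
  ring


def tm {F : Type*} [Field F] (p a v : F) (N k : ℕ) : F :=
  (1 - a * (p ^ k) ^ 2) / (1 - a) * pc (p ^ 2) (a ^ 2) k / pc (p ^ 2) (p ^ 2) k
    * (pc p (1 / p ^ N) k * pc p (p * p ^ N) k / (pc p (a * p * p ^ N) k * pc p (a / p ^ N) k))
    * (-a) ^ k * (∏ i ∈ range k, (1 - v * p ^ i + p * (p ^ i) ^ 2))
    * (∏ i ∈ Ico k N, (1 - a * v * p ^ i + a ^ 2 * p * (p ^ i) ^ 2))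

def Gc {F : Type*} [Field F] (p a v : F) (N k : ℕ) : F :=
  pc (p ^ 2) (a ^ 2) k / pc (p ^ 2) (p ^ 2) k
    * (pc p (1 / (p * p ^ N)) k * pc p (p * p * p ^ N) k /
        (pc p (a * p ^ 3 * p ^ N) k * pc p (a / p ^ N) k))
    * (-a) ^ k * (∏ i ∈ range k, (1 - v * p ^ i + p * (p ^ i) ^ 2))
    * (∏ i ∈ Ico k (N + 1), (1 - a * v * p ^ i + a ^ 2 * p * (p ^ i) ^ 2))
    * (-(p * p ^ N) * (1 - (p ^ k) ^ 2) * (1 - a ^ 2 * p * p ^ N * p ^ k)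
        * (1 - a * p ^ k / (p * p ^ N)) * (1 - a * p ^ 2 * p ^ N * p ^ k) /
        ((1 + a) * (1 - a) ^ 2 * (1 - a * p) * (1 - p * p ^ N * p ^ k)))

section
variable {F : Type*} [Field F] (p a v : F)

lemma ap_ne (hp : p ≠ 0) (h : ∀ m : ℤ, a * p ^ m ≠ 1) (m : ℤ) : 1 - a * p ^ m ≠ 0 := by
  intro h'; apply h m; linear_combination -h'

lemma tele (N : ℕ) (hp : p ≠ 0) (hp1 : ∀ m : ℕ, 0 < m → p ^ m ≠ 1)
    (h : ∀ m : ℤ, a * p ^ m ≠ 1) (ha1 : a ≠ -1) (k : ℕ) (hk : k ≤ N) :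
    tm p (a * p) v (N + 1) k -
      (1 - a * p * p ^ N) * (1 - a * p ^ 2 * p ^ N) / ((1 - a) * (1 - a * p)) *
      (1 - a * v * p ^ N + a ^ 2 * p * (p ^ N) ^ 2) * tm p a v N k =
    Gc p a v N (k + 1) - Gc p a v N k := by
  have hP : p ^ N ≠ 0 := pow_ne_zero _ hp
  have hz : ∀ m : ℕ, 1 - a * p ^ m ≠ 0 := fun m => by
    have := ap_ne p a hp h m; simpa using this
  have h1 : 1 - a ≠ 0 := by simpa using hz 0
  have h2 : 1 + a ≠ 0 := by intro h; apply ha1; linear_combination h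
  have h3 : 1 - a * p ≠ 0 := by simpa using hz 1
  have hq : ∀ m : ℕ, 0 < m → 1 - p ^ m ≠ 0 := fun m hm h => hp1 m hm (by linear_combination -h)
  have h4 : 1 - p * p ^ N * p ^ k ≠ 0 := by
    have := hq (1 + N + k) (by omega); simpa [pow_add] using this
  have h4' : 1 - p * p * p ^ N * p ^ k ≠ 0 := by
    have := hq (2 + N + k) (by omega); simpa [pow_add, pow_two] using this
  have h5 : p * p ^ N - 1 ≠ 0 := by
    have := hq (1 + N) (by omega)
    intro h; apply this; rw [pow_add]; linear_combination -h
  have hA2 : pc (p ^ 2) (p ^ 2) k ≠ 0 := pc_ne _ _ _ fun i _ => by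
    have := hq (2 + 2 * i) (by omega); simpa [pow_add, pow_mul] using this
  have hD1 : pc p (a * p ^ 3 * p ^ N) k ≠ 0 := pc_ne _ _ _ fun i _ => by
    have := hz (3 + N + i); simpa [pow_add, mul_assoc] using this
  have hPk : ∀ i : ℕ, 1 - a / p ^ N * p ^ i ≠ 0 := fun i => by
    have := ap_ne p a hp h (i - N)
    rw [zpow_sub₀ hp] at this
    intro h; apply this; rw [zpow_natCast, zpow_natCast]; linear_combination h
  have hD2 : pc p (a / p ^ N) k ≠ 0 := pc_ne _ _ _ fun i _ => hPk i
  have h6 : 1 - p ^ 2 * (p ^ k) ^ 2 ≠ 0 := by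
    have := hq (2 + k * 2) (by omega); simpa [pow_add, pow_mul] using this
  have h7 : 1 - a * p ^ 3 * p ^ N * p ^ k ≠ 0 := by
    have := hz (3 + N + k); simpa [pow_add, mul_assoc] using this
  have h8 : p ^ N - a * p ^ k ≠ 0 := by
    intro h'; apply hPk k; field_simp; linear_combination h'
  have h9 : 1 - a * p * p ^ N ≠ 0 := by
    have := hz (1 + N); simpa [pow_add, mul_assoc] using this
  have h10 : 1 - a * p ^ 2 * p ^ N ≠ 0 := by
    have := hz (2 + N); simpa [pow_add, mul_assoc] using this
  have h11 : 1 - a * p * p ^ N * p ^ k ≠ 0 := by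
    have := hz (1 + N + k); simpa [pow_add, mul_assoc] using this
  have h12 : 1 - a * p ^ 2 * p ^ N * p ^ k ≠ 0 := by
    have := hz (2 + N + k); simpa [pow_add, mul_assoc] using this
  have key := alg_step p a v (p ^ N) (p ^ k) (pc (p ^ 2) (a ^ 2) k) (pc (p ^ 2) (p ^ 2) k)
    (pc p (1 / (p * p ^ N)) k) (pc p (p * p * p ^ N) k) (pc p (a * p ^ 3 * p ^ N) k)
    (pc p (a / p ^ N) k)
    (∏ i ∈ Ico (k + 1) (N + 1), (1 - a * v * p ^ i + a ^ 2 * p * (p ^ i) ^ 2))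
    (∏ i ∈ range k, (1 - v * p ^ i + p * (p ^ i) ^ 2)) ((-a) ^ k)
    hp hP h1 h2 h3 h4 h4' h5 hA2 hD1 hD2 h6 h7 h8 h9 h10 h11 h12
  have ha2 : (1 - a ^ 2) ≠ 0 := by
    have : (1 - a ^ 2) = (1 - a) * (1 + a) := by ring
    rw [this]; exact mul_ne_zero h1 h2
  -- pieces
  have b1 : pc (p ^ 2) ((a * p) ^ 2) k = pc (p ^ 2) (a ^ 2) k * (1 - a ^ 2 * (p ^ k) ^ 2) / (1 - a ^ 2) := by
    rw [eq_div_iff ha2]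
    have := pc_shift (p ^ 2) (a ^ 2) k
    rw [mul_pow, mul_comm _ (1 - a ^ 2), ← this, ← pow_mul, ← pow_mul, mul_comm 2 k]
  have b2 : pc p (1 / p ^ N) k = pc p (1 / (p * p ^ N)) k * (1 - p ^ k / (p * p ^ N)) / (1 - 1 / (p * p ^ N)) := by
    have hne : 1 - 1 / (p * p ^ N) ≠ 0 := by
      intro h; apply h5; field_simp at h; linear_combination h
    rw [eq_div_iff hne]
    have := pc_shift p (1 / (p * p ^ N)) k
    have e : 1 / (p * p ^ N) * p = 1 / p ^ N := by field_simp
    rw [e] at this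
    rw [mul_comm, ← this]; ring
  have b3 : pc p (p * p ^ N) k = pc p (p * p * p ^ N) k * (1 - p * p ^ N) / (1 - p * p ^ N * p ^ k) := by
    rw [eq_div_iff h4, pc_shift, mul_comm]; congr 2; ring
  have b4 : pc p (a * p * p ^ N) k = pc p (a * p ^ 3 * p ^ N) k * (1 - a * p * p ^ N) * (1 - a * p ^ 2 * p ^ N) /
            ((1 - a * p * p ^ N * p ^ k) * (1 - a * p ^ 2 * p ^ N * p ^ k)) := by
    rw [eq_div_iff (mul_ne_zero h11 h12), ← mul_assoc, pc_shift]
    have e1 : a * p * p ^ N * p = a * p ^ 2 * p ^ N := by ring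
    have e2 : a * p ^ 2 * p ^ N * p = a * p ^ 3 * p ^ N := by ring
    rw [e1, mul_assoc, pc_shift, e2]; ring
  have b5 : (∏ i ∈ Ico k (N + 1), (1 - a * p * v * p ^ i + (a * p) ^ 2 * p * (p ^ i) ^ 2)) =
     (∏ i ∈ Ico (k + 1) (N + 1), (1 - a * v * p ^ i + a ^ 2 * p * (p ^ i) ^ 2)) *
      (1 - a * v * (p * p ^ N) + a ^ 2 * p * (p * p ^ N) ^ 2) := by
    have : ∀ i, (1 - a * p * v * p ^ i + (a * p) ^ 2 * p * (p ^ i) ^ 2) =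
        (fun i => (1 - a * v * p ^ i + a ^ 2 * p * (p ^ i) ^ 2)) (i + 1) := by
      intro i; simp only; ring
    rw [prod_congr rfl (fun i _ => this i), Finset.prod_Ico_add'
      (fun i => (1 - a * v * p ^ i + a ^ 2 * p * (p ^ i) ^ 2)) k (N+1) 1,
      Finset.prod_Ico_succ_top (by omega)]
    congr 1; ring
  have b6 : (∏ i ∈ Ico k (N + 1), (1 - a * v * p ^ i + a ^ 2 * p * (p ^ i) ^ 2)) =
     (1 - a * v * p ^ k + a ^ 2 * p * (p ^ k) ^ 2) *
     (∏ i ∈ Ico (k + 1) (N + 1), (1 - a * v * p ^ i + a ^ 2 * p * (p ^ i) ^ 2)) := by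
    rw [Finset.prod_eq_prod_Ico_succ_bot (by omega)]
  have b7 : (1 - a * v * p ^ N + a ^ 2 * p * (p ^ N) ^ 2) *
      (∏ i ∈ Ico k N, (1 - a * v * p ^ i + a ^ 2 * p * (p ^ i) ^ 2)) =
     (1 - a * v * p ^ k + a ^ 2 * p * (p ^ k) ^ 2) *
     (∏ i ∈ Ico (k + 1) (N + 1), (1 - a * v * p ^ i + a ^ 2 * p * (p ^ i) ^ 2)) := by
    rw [← b6, Finset.prod_Ico_succ_top (by omega), mul_comm]
  have c1 : tm p (a * p) v (N + 1) k = (1 - a * p * (p ^ k) ^ 2) / (1 - a * p) * (pc (p ^ 2) (a ^ 2) k * (1 - a ^ 2 * (p ^ k) ^ 2) / (1 - a ^ 2)) / pc (p ^ 2) (p ^ 2) k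
        * (pc p (1 / (p * p ^ N)) k * pc p (p * p * p ^ N) k / (pc p (a * p ^ 3 * p ^ N) k * pc p (a / p ^ N) k)) * ((-a) ^ k * p ^ k) * (∏ i ∈ range k, (1 - v * p ^ i + p * (p ^ i) ^ 2))
        * ((∏ i ∈ Ico (k + 1) (N + 1), (1 - a * v * p ^ i + a ^ 2 * p * (p ^ i) ^ 2)) * (1 - a * v * (p * p ^ N) + a ^ 2 * p * (p * p ^ N) ^ 2)) := by
    unfold tm
    rw [b1, b5]
    have e1 : p ^ (N + 1) = p * p ^ N := by ring
    have e2 : p * (p * p ^ N) = p * p * p ^ N := by ring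
    have e3 : a * p * p * (p * p ^ N) = a * p ^ 3 * p ^ N := by ring
    have e4 : a * p / (p * p ^ N) = a / p ^ N := by field_simp
    have e5 : (-(a * p)) ^ k = (-a) ^ k * p ^ k := by rw [← mul_pow]; congr 1; ring
    rw [e1, e2, e3, e4, e5]
  have c2 : Gc p a v N (k + 1) = (pc (p ^ 2) (a ^ 2) k * (1 - a ^ 2 * (p ^ k) ^ 2)) / (pc (p ^ 2) (p ^ 2) k * (1 - p ^ 2 * (p ^ k) ^ 2)) *
      ((pc p (1 / (p * p ^ N)) k * (1 - p ^ k / (p * p ^ N))) * (pc p (p * p * p ^ N) k * (1 - p * p * p ^ N * p ^ k)) /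
        ((pc p (a * p ^ 3 * p ^ N) k * (1 - a * p ^ 3 * p ^ N * p ^ k)) * (pc p (a / p ^ N) k * (1 - a * p ^ k / p ^ N)))) * ((-a) ^ k * (-a)) *
        ((∏ i ∈ range k, (1 - v * p ^ i + p * (p ^ i) ^ 2)) * (1 - v * p ^ k + p * (p ^ k) ^ 2)) * (∏ i ∈ Ico (k + 1) (N + 1), (1 - a * v * p ^ i + a ^ 2 * p * (p ^ i) ^ 2)) *
       (-(p * p ^ N) * (1 - (p * p ^ k) ^ 2) * (1 - a ^ 2 * p * p ^ N * (p * p ^ k)) * (1 - a * (p * p ^ k) / (p * p ^ N)) *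
        (1 - a * p ^ 2 * p ^ N * (p * p ^ k)) /
          ((1 + a) * (1 - a) ^ 2 * (1 - a * p) * (1 - p * p ^ N * (p * p ^ k)))) := by
    unfold Gc
    simp only [pc_succ, prod_range_succ, pow_succ (-a) k]
    have e1 : p ^ (k + 1) = p * p ^ k := by ring
    have e2 : (p ^ 2) ^ k = (p ^ k) ^ 2 := by rw [← pow_mul, ← pow_mul, mul_comm]
    have e3 : 1 / (p * p ^ N) * p ^ k = p ^ k / (p * p ^ N) := by ring
    have e4 : a / p ^ N * p ^ k = a * p ^ k / p ^ N := by ring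
    rw [e1, e2, e3, e4]
  rw [c1, c2, ← sub_eq_zero] 
  rw [← sub_eq_zero] at key
  rw [← key]
  unfold Gc tm
  rw [b2, b3, b4, b6]
  linear_combination (-((1 - a * p * p ^ N) * (1 - a * p ^ 2 * p ^ N) / ((1 - a) * (1 - a * p)) *
      ((1 - a * (p ^ k) ^ 2) / (1 - a) * pc (p ^ 2) (a ^ 2) k / pc (p ^ 2) (p ^ 2) k
        * ((pc p (1 / (p * p ^ N)) k * (1 - p ^ k / (p * p ^ N)) / (1 - 1 / (p * p ^ N))) * (pc p (p * p * p ^ N) k * (1 - p * p ^ N) / (1 - p * p ^ N * p ^ k)) /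
          ((pc p (a * p ^ 3 * p ^ N) k * (1 - a * p * p ^ N) * (1 - a * p ^ 2 * p ^ N) /
            ((1 - a * p * p ^ N * p ^ k) * (1 - a * p ^ 2 * p ^ N * p ^ k))) * pc p (a / p ^ N) k)) * (-a) ^ k * (∏ i ∈ range k, (1 - v * p ^ i + p * (p ^ i) ^ 2))))) * b7

end


section
variable {F : Type*} [Field F] (p v : F)

lemma step_sum (a : F) (N : ℕ) (hp : p ≠ 0) (hp1 : ∀ m : ℕ, 0 < m → p ^ m ≠ 1)
    (h : ∀ m : ℤ, a * p ^ m ≠ 1) (ha1 : a ≠ -1) :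
    ∑ k ∈ range (N + 2), tm p (a * p) v (N + 1) k =
      (1 - a * p * p ^ N) * (1 - a * p ^ 2 * p ^ N) / ((1 - a) * (1 - a * p)) *
      (1 - a * v * p ^ N + a ^ 2 * p * (p ^ N) ^ 2) * ∑ k ∈ range (N + 1), tm p a v N k := by
  have hP : p ^ N ≠ 0 := pow_ne_zero _ hp
  have hz : ∀ m : ℕ, 1 - a * p ^ m ≠ 0 := fun m => by
    have := ap_ne p a hp h m; simpa using this
  have h1 : 1 - a ≠ 0 := by simpa using hz 0
  have h2 : 1 + a ≠ 0 := by intro h; apply ha1; linear_combination h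
  have h3 : 1 - a * p ≠ 0 := by simpa using hz 1
  have hq : ∀ m : ℕ, 0 < m → 1 - p ^ m ≠ 0 := fun m hm h => hp1 m hm (by linear_combination -h)
  have ha2 : (1 - a ^ 2) ≠ 0 := by
    have : (1 - a ^ 2) = (1 - a) * (1 + a) := by ring
    rw [this]; exact mul_ne_zero h1 h2
  have hs := Finset.sum_congr rfl (fun k (hk : k ∈ range (N + 1)) =>
    tele p a v N hp hp1 h ha1 k (by simpa [Nat.lt_succ_iff] using hk))
  rw [Finset.sum_range_sub, Finset.sum_sub_distrib, ← Finset.mul_sum] at hs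
  have g0 : Gc p a v N 0 = 0 := by simp [Gc]
  have g1 : tm p (a * p) v (N + 1) (N + 1) = - Gc p a v N (N + 1) := by
    unfold tm Gc
    have b1 : pc (p ^ 2) ((a * p) ^ 2) (N + 1) = pc (p ^ 2) (a ^ 2) (N + 1) *
        (1 - a ^ 2 * (p * p ^ N) ^ 2) / (1 - a ^ 2) := by
      rw [eq_div_iff ha2]
      have := pc_shift (p ^ 2) (a ^ 2) (N + 1)
      rw [mul_pow, mul_comm _ (1 - a ^ 2), ← this, ← pow_mul]; ring
    rw [b1]
    have e1 : p ^ (N + 1) = p * p ^ N := by ring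
    have e2 : p * (p * p ^ N) = p * p * p ^ N := by ring
    have e3 : a * p * p * (p * p ^ N) = a * p ^ 3 * p ^ N := by ring
    have e4 : a * p / (p * p ^ N) = a / p ^ N := by field_simp
    have e5 : (-(a * p)) ^ (N + 1) = (-a) ^ (N + 1) * (p * p ^ N) := by
      rw [← e1, ← mul_pow]; congr 1; ring
    have e6 : a * (p * p ^ N) / (p * p ^ N) = a := by field_simp
    rw [e1, e2, e3, e4, e5, e6]
    simp only [Ico_self, prod_empty, mul_one]
    have e7 : 1 - p * p ^ N * (p * p ^ N) = 1 - (p * p ^ N) ^ 2 := by ring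
    have e8 : 1 - a ^ 2 = (1 - a) * (1 + a) := by ring
    have h9 : 1 - (p * p ^ N) ^ 2 ≠ 0 := by
      have := hq ((1 + N) * 2) (by omega)
      simpa [pow_mul, pow_add] using this
    rw [e7, e8]
    have e9 : 1 - a ^ 2 * p * p ^ N * (p * p ^ N) = 1 - a ^ 2 * (p * p ^ N) ^ 2 := by ring
    have e10 : 1 - a * p ^ 2 * p ^ N * (p * p ^ N) = 1 - a * p * (p * p ^ N) ^ 2 := by ring
    rw [e9, e10]
    generalize p * p ^ N = K at *
    generalize 1 - K ^ 2 = w at *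
    generalize 1 - a ^ 2 * K ^ 2 = w2 at *
    generalize 1 - a * p * K ^ 2 = w3 at *
    generalize 1 - a = w4 at *
    generalize 1 + a = w5 at *
    generalize 1 - a * p = w6 at *
    generalize pc p (1 / K) (N + 1) * pc p (p * p * p ^ N) (N + 1) /
      (pc p (a * p ^ 3 * p ^ N) (N + 1) * pc p (a / p ^ N) (N + 1)) = w7 at *
    generalize ∏ i ∈ range (N + 1), (1 - v * p ^ i + p * (p ^ i) ^ 2) = w8
    generalize (-a) ^ (N + 1) = w9
    generalize pc (p ^ 2) (a ^ 2) (N + 1) = w10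
    generalize pc (p ^ 2) (p ^ 2) (N + 1) = w11
    by_cases hw : w11 = 0
    · simp [hw]
    field_simp
  rw [Finset.sum_range_succ, g1]
  rw [g0] at hs
  linear_combination hs

lemma ident (hp : p ≠ 0) (hp1 : ∀ m : ℕ, 0 < m → p ^ m ≠ 1) (N : ℕ) : ∀ a : F,
    (∀ m : ℤ, a * p ^ m ≠ 1) → (∀ m : ℤ, a * p ^ m ≠ -1) →
    ∑ k ∈ range (N + 1), tm p a v N k =
      pc p (a * p) N * pc p a N / pc p (a / p ^ N) (2 * N) *
      ∏ i ∈ range N, (1 - a * v * (p ^ (2 * i) / p ^ N) +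
        a ^ 2 * p * (p ^ (2 * i) / p ^ N) ^ 2) := by
  induction N with
  | zero =>
    intro a h h'
    have h1 : 1 - a ≠ 0 := by
      have := ap_ne p a hp h 0; simpa using this
    simp [tm, pc_zero, h1]
  | succ N ih =>
    intro a' h h'
    obtain ⟨a, rfl⟩ : ∃ a, a' = a * p := ⟨a' / p, by field_simp⟩
    have hh : ∀ m : ℤ, a * p ^ m ≠ 1 := fun m => by
      have := h (m - 1); rw [zpow_sub_one₀ hp] at this
      intro h; apply this; rw [← h]; field_simp
    have hh' : ∀ m : ℤ, a * p ^ m ≠ -1 := fun m => by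
      have := h' (m - 1); rw [zpow_sub_one₀ hp] at this
      intro h; apply this; rw [← h]; field_simp
    have hP : p ^ N ≠ 0 := pow_ne_zero _ hp
    have hz : ∀ m : ℕ, 1 - a * p ^ m ≠ 0 := fun m => by
      have := ap_ne p a hp hh m; simpa using this
    have h1 : 1 - a ≠ 0 := by simpa using hz 0
    have h3 : 1 - a * p ≠ 0 := by simpa using hz 1
    rw [step_sum p v a N hp hp1 hh (by simpa using hh' 0), ih a hh hh']
    have d1 : pc p (a * p * p) (N + 1) = pc p (a * p) N * (1 - a * p * p ^ N) *
        (1 - a * p ^ 2 * p ^ N) / (1 - a * p) := by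
      rw [eq_div_iff h3, mul_comm, ← pc_shift, pc_succ]; ring
    have d2 : pc p (a * p) (N + 1) = pc p a N * (1 - a * p ^ N) * (1 - a * p * p ^ N) / (1 - a) := by
      rw [eq_div_iff h1, mul_comm, ← pc_shift, pc_succ]; ring
    have d3 : pc p (a * p / p ^ (N + 1)) (2 * (N + 1)) = pc p (a / p ^ N) (2 * N) *
        (1 - a * p ^ N) * (1 - a * p * p ^ N) := by
      have e4 : a * p / p ^ (N + 1) = a / p ^ N := by rw [pow_succ]; field_simp
      rw [e4, show 2 * (N + 1) = 2 * N + 1 + 1 by ring, pc_succ, pc_succ]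
      have e5 : a / p ^ N * p ^ (2 * N) = a * p ^ N := by
        rw [two_mul, pow_add]; field_simp
      have e6 : a / p ^ N * p ^ (2 * N + 1) = a * p * p ^ N := by
        rw [two_mul, pow_add, pow_add]; field_simp
      rw [e5, e6]
    have d4 : (∏ i ∈ range (N + 1), (1 - a * p * v * (p ^ (2 * i) / p ^ (N + 1)) +
        (a * p) ^ 2 * p * (p ^ (2 * i) / p ^ (N + 1)) ^ 2)) =
        (∏ i ∈ range N, (1 - a * v * (p ^ (2 * i) / p ^ N) +
        a ^ 2 * p * (p ^ (2 * i) / p ^ N) ^ 2)) * (1 - a * v * p ^ N + a ^ 2 * p * (p ^ N) ^ 2) := by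
      have : ∀ i, (1 - a * p * v * (p ^ (2 * i) / p ^ (N + 1)) +
        (a * p) ^ 2 * p * (p ^ (2 * i) / p ^ (N + 1)) ^ 2) = (1 - a * v * (p ^ (2 * i) / p ^ N) +
        a ^ 2 * p * (p ^ (2 * i) / p ^ N) ^ 2) := by
        intro i
        have : p ^ (2 * i) / p ^ (N + 1) = p ^ (2 * i) / p ^ N / p := by rw [pow_succ]; field_simp
        rw [this]; field_simp
      rw [prod_congr rfl fun i _ => this i, prod_range_succ]
      have e5 : p ^ (2 * N) / p ^ N = p ^ N := by
        rw [two_mul, pow_add]; field_simp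
      rw [e5]
    rw [d1, d2, d3, d4]
    have h9 : 1 - a * p ^ N ≠ 0 := hz N
    have h10 : 1 - a * p * p ^ N ≠ 0 := by
      have := hz (1 + N); simpa [pow_add, mul_assoc] using this
    have h11 : pc p (a / p ^ N) (2 * N) ≠ 0 := pc_ne _ _ _ fun i _ => by
      have := ap_ne p a hp hh (i - N)
      rw [zpow_sub₀ hp] at this
      intro h; apply this; rw [zpow_natCast, zpow_natCast]; linear_combination h
    generalize (∏ i ∈ range N, (1 - a * v * (p ^ (2 * i) / p ^ N) +
        a ^ 2 * p * (p ^ (2 * i) / p ^ N) ^ 2)) = w1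
    generalize 1 - a * v * p ^ N + a ^ 2 * p * (p ^ N) ^ 2 = w2
    generalize pc p (a / p ^ N) (2 * N) = w3 at *
    generalize 1 - a * p * p ^ N = w4 at *
    generalize 1 - a * p ^ N = w5 at *
    generalize 1 - a * p = w6 at *
    generalize 1 - a = w7 at *
    generalize 1 - a * p ^ 2 * p ^ N = w8 at *
    field_simp
end


open Polynomial in
lemma cyc_prime (d : ℕ) [NeZero d] : Prime (cyclotomic d ℚ) :=
  (cyclotomic.irreducible_rat (NeZero.pos d)).prime

/-- local ring at the d-th cyclotomic polynomial -/
def Od (d : ℕ) [NeZero d] : Subring (RatFunc ℚ) where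
  carrier := {f | ∃ r s : Polynomial ℚ, ¬ Polynomial.cyclotomic d ℚ ∣ s ∧
    f = algebraMap (Polynomial ℚ) (RatFunc ℚ) r / algebraMap (Polynomial ℚ) (RatFunc ℚ) s}
  mul_mem' := by
    rintro _ _ ⟨r, s, hs, rfl⟩ ⟨r', s', hs', rfl⟩
    refine ⟨r * r', s * s', fun h => ?_, by rw [map_mul, map_mul, div_mul_div_comm]⟩
    rcases (cyc_prime d).dvd_or_dvd h with h | h
    · exact hs h
    · exact hs' h
  one_mem' := ⟨1, 1, fun h => (cyc_prime d).not_isUnit (isUnit_of_dvd_one h), by simp⟩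
  add_mem' := by
    rintro _ _ ⟨r, s, hs, rfl⟩ ⟨r', s', hs', rfl⟩
    have h1 : algebraMap (Polynomial ℚ) (RatFunc ℚ) s ≠ 0 := by
      intro h; apply hs; rw [(map_eq_zero_iff _ (RatFunc.algebraMap_injective ℚ)).1 h]
      exact dvd_zero _
    have h2 : algebraMap (Polynomial ℚ) (RatFunc ℚ) s' ≠ 0 := by
      intro h; apply hs'; rw [(map_eq_zero_iff _ (RatFunc.algebraMap_injective ℚ)).1 h]
      exact dvd_zero _
    refine ⟨r * s' + s * r', s * s', fun h => ?_, ?_⟩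
    · rcases (cyc_prime d).dvd_or_dvd h with h | h
      · exact hs h
      · exact hs' h
    · rw [div_add_div _ _ h1 h2]; simp
  zero_mem' := ⟨0, 1, fun h => (cyc_prime d).not_isUnit (isUnit_of_dvd_one h), by simp⟩
  neg_mem' := by
    rintro _ ⟨r, s, hs, rfl⟩
    exact ⟨-r, s, hs, by rw [map_neg, neg_div]⟩

lemma q_ne : q ≠ 0 := RatFunc.X_ne_zero

lemma q_alg : q = algebraMap (Polynomial ℚ) (RatFunc ℚ) Polynomial.X := by
  simp [q]

lemma qpow_ne_one (m : ℕ) (hm : 0 < m) : q ^ m ≠ 1 := by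
  intro h
  rw [q_alg, ← map_pow, ← map_one (algebraMap (Polynomial ℚ) (RatFunc ℚ))] at h
  have := RatFunc.algebraMap_injective ℚ h
  have := congrArg Polynomial.natDegree this
  simp at this; omega

lemma qz_ne_one (m : ℤ) (hm : m ≠ 0) : q ^ m ≠ 1 := by
  rcases Int.lt_or_gt_of_ne hm with h | h
  · obtain ⟨k, rfl⟩ : ∃ k : ℕ, m = -k := ⟨(-m).toNat, by omega⟩
    rw [zpow_neg, zpow_natCast]
    intro h'; exact qpow_ne_one k (by omega) (inv_eq_one.1 h')
  · obtain ⟨k, rfl⟩ : ∃ k : ℕ, m = k := ⟨m.toNat, by omega⟩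
    rw [zpow_natCast]; exact qpow_ne_one k (by omega)

lemma qz_ne_neg_one (m : ℤ) : q ^ m ≠ -1 := by
  intro h
  by_cases hm : m = 0
  · subst hm; simp at h; norm_num at h
  · apply qz_ne_one (m * 2) (by omega)
    rw [zpow_mul, h]; norm_num

lemma one_sub_qz (m : ℤ) (hm : m ≠ 0) : 1 - q ^ m ≠ 0 := by
  intro h; exact qz_ne_one m hm (by linear_combination -h)

lemma one_sub_q : 1 - q ≠ 0 := by simpa using one_sub_qz 1 (by norm_num)

section
variable (d : ℕ) [NeZero d]

lemma alg_mem (r : Polynomial ℚ) : algebraMap (Polynomial ℚ) (RatFunc ℚ) r ∈ Od d :=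
  ⟨r, 1, fun h => (cyc_prime d).not_isUnit (isUnit_of_dvd_one h), by simp⟩

lemma alg_inv_mem (s : Polynomial ℚ) (hs : ¬ Polynomial.cyclotomic d ℚ ∣ s) :
    (algebraMap (Polynomial ℚ) (RatFunc ℚ) s)⁻¹ ∈ Od d :=
  ⟨1, s, hs, by simp⟩

lemma q_mem : q ∈ Od d := by rw [q_alg]; exact alg_mem d _

lemma cyc_dvd : Polynomial.cyclotomic d ℚ ∣ (1 - Polynomial.X ^ d) := by
  have := Polynomial.cyclotomic.dvd_X_pow_sub_one d ℚ
  rw [← dvd_neg]; simpa using this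

lemma qinv_mem : q⁻¹ ∈ Od d := by
  rw [q_alg]
  apply alg_inv_mem
  intro h
  have h1 := cyc_dvd d
  have h2 : Polynomial.cyclotomic d ℚ ∣ Polynomial.X ^ d := dvd_pow h (NeZero.ne d)
  exact (cyc_prime d).not_isUnit (isUnit_of_dvd_one (by simpa using dvd_add h1 h2))

lemma qz_mem (m : ℤ) : q ^ m ∈ Od d := by
  obtain ⟨k, rfl | rfl⟩ := m.eq_nat_or_neg
  · rw [zpow_natCast]; exact pow_mem (q_mem d) k
  · rw [zpow_neg, zpow_natCast, ← inv_pow]; exact pow_mem (qinv_mem d) k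

lemma one_sub_inv_mem_nat (m : ℕ) (hm : ¬ d ∣ m) : (1 - q ^ m)⁻¹ ∈ Od d := by
  have : 1 - q ^ m = algebraMap (Polynomial ℚ) (RatFunc ℚ) (1 - Polynomial.X ^ m) := by
    rw [q_alg]; simp
  rw [this]
  apply alg_inv_mem
  rintro ⟨r, hr⟩
  have hζ := Complex.isPrimitiveRoot_exp d (NeZero.ne d)
  set ζ := Complex.exp (2 * Real.pi * Complex.I / d)
  apply hm
  rw [← hζ.pow_eq_one_iff_dvd]
  have h1 := congrArg (Polynomial.aeval ζ) hr
  have h2 : Polynomial.aeval ζ (Polynomial.cyclotomic d ℚ) = 0 := by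
    have := hζ.isRoot_cyclotomic (NeZero.pos d)
    rw [Polynomial.IsRoot.def, ← Polynomial.map_cyclotomic d (algebraMap ℚ ℂ),
      Polynomial.eval_map_algebraMap] at this
    exact this
  rw [map_mul, h2, zero_mul] at h1
  simp at h1
  linear_combination -h1

lemma one_sub_inv_mem (m : ℤ) (hm : ¬ (d : ℤ) ∣ m) : (1 - q ^ m)⁻¹ ∈ Od d := by
  obtain ⟨k, rfl | rfl⟩ := m.eq_nat_or_neg
  · rw [zpow_natCast]; exact one_sub_inv_mem_nat d k (by simpa [Int.natCast_dvd_natCast] using hm)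
  · have h := one_sub_inv_mem_nat d k (by simpa [Int.natCast_dvd_natCast] using hm)
    have : (1 - q ^ (-(k : ℤ)))⁻¹ = - q ^ k * (1 - q ^ k)⁻¹ := by
      rw [zpow_neg, zpow_natCast]
      have : q ^ k ≠ 0 := pow_ne_zero _ q_ne
      have e : 1 - (q ^ k)⁻¹ = - (1 - q ^ k) * (q ^ k)⁻¹ := by field_simp; ring
      rw [e, mul_inv, inv_neg, inv_inv]; ring
    rw [this]
    exact mul_mem (neg_mem (pow_mem (q_mem d) k)) h

lemma one_sub_pi_inv (f : RatFunc ℚ) (hf : f ∈ Od d) : (1 - (1 - q ^ d) * f)⁻¹ ∈ Od d := by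
  obtain ⟨r, s, hs, rfl⟩ := hf
  have h1 : algebraMap (Polynomial ℚ) (RatFunc ℚ) s ≠ 0 := by
    intro h; apply hs; rw [(map_eq_zero_iff _ (RatFunc.algebraMap_injective ℚ)).1 h]
    exact dvd_zero _
  have hs' : ¬ Polynomial.cyclotomic d ℚ ∣ (s - (1 - Polynomial.X ^ d) * r) := fun h =>
    hs (by simpa using dvd_add h ((cyc_dvd d).mul_right r))
  refine ⟨s, s - (1 - Polynomial.X ^ d) * r, hs', ?_⟩
  rw [map_sub, map_mul, map_sub, map_one, map_pow, ← q_alg]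
  rw [← inv_div]; congr 1
  field_simp

lemma one_sub_mul_inv (m : ℕ) (hm : 0 < m) : ((1 - q ^ d) / (1 - q ^ (d * m))) ∈ Od d := by
  have h0 : 1 - q ^ d ≠ 0 := by
    intro h; exact qpow_ne_one d (NeZero.pos d) (by linear_combination -h)
  have e : (1 - q ^ (d * m)) = (1 - q ^ d) *
      algebraMap (Polynomial ℚ) (RatFunc ℚ) (∑ i ∈ range m, (Polynomial.X ^ d) ^ i) := by
    rw [map_sum]; simp only [map_pow]; rw [← q_alg, pow_mul]
    have := mul_neg_geom_sum (q ^ d) m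
    rw [this]
  rw [e, ← div_div, div_self h0, one_div]
  apply alg_inv_mem
  intro h
  have h2 : (1 - Polynomial.X ^ d : Polynomial ℚ) ∣ (m : Polynomial ℚ) - ∑ i ∈ range m, (Polynomial.X ^ d) ^ i := by
    have : (m : Polynomial ℚ) - ∑ i ∈ range m, (Polynomial.X ^ d) ^ i =
      ∑ i ∈ range m, (1 - (Polynomial.X ^ d) ^ i) := by simp
    rw [this]
    apply Finset.dvd_sum
    intro i _
    have := sub_dvd_pow_sub_pow (1 : Polynomial ℚ) (Polynomial.X ^ d) i
    simpa using this
  have h3 : Polynomial.cyclotomic d ℚ ∣ (m : Polynomial ℚ) := by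
    have := dvd_add ((cyc_dvd d).trans h2) h
    simpa using this
  apply (cyc_prime d).not_isUnit
  apply isUnit_of_dvd_unit h3
  rw [← Polynomial.C_eq_natCast]
  exact Polynomial.isUnit_C.2 (by simp; omega)

/-- divisible by π^m -/
def cg (m : ℕ) (f : RatFunc ℚ) : Prop := ∃ g ∈ Od d, f = (1 - q ^ d) ^ m * g

variable {d}
lemma cg.add {m : ℕ} {f g : RatFunc ℚ} (hf : cg d m f) (hg : cg d m g) : cg d m (f + g) := by
  obtain ⟨a, ha, rfl⟩ := hf
  obtain ⟨b, hb, rfl⟩ := hg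
  exact ⟨a + b, add_mem ha hb, by ring⟩
lemma cg.neg {m : ℕ} {f : RatFunc ℚ} (hf : cg d m f) : cg d m (-f) := by
  obtain ⟨a, ha, rfl⟩ := hf
  exact ⟨-a, neg_mem ha, by ring⟩
lemma cg.sub {m : ℕ} {f g : RatFunc ℚ} (hf : cg d m f) (hg : cg d m g) : cg d m (f - g) := by
  rw [sub_eq_add_neg]; exact hf.add hg.neg
lemma cg.mul {m m' : ℕ} {f g : RatFunc ℚ} (hf : cg d m f) (hg : cg d m' g) :
    cg d (m + m') (f * g) := by
  obtain ⟨a, ha, rfl⟩ := hf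
  obtain ⟨b, hb, rfl⟩ := hg
  exact ⟨a * b, mul_mem ha hb, by ring⟩
lemma cg.mulO {m : ℕ} {f g : RatFunc ℚ} (hf : cg d m f) (hg : g ∈ Od d) :
    cg d m (f * g) := by
  obtain ⟨a, ha, rfl⟩ := hf
  exact ⟨a * g, mul_mem ha hg, by ring⟩
lemma cg.Omul {m : ℕ} {f g : RatFunc ℚ} (hf : cg d m f) (hg : g ∈ Od d) :
    cg d m (g * f) := by rw [mul_comm]; exact hf.mulO hg
lemma pi_mem : 1 - q ^ d ∈ Od d := sub_mem (one_mem _) (pow_mem (q_mem d) d)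
lemma cg.le {m m' : ℕ} {f : RatFunc ℚ} (hf : cg d m f) (h : m' ≤ m) : cg d m' f := by
  obtain ⟨a, ha, rfl⟩ := hf
  refine ⟨(1 - q ^ d) ^ (m - m') * a, mul_mem (pow_mem pi_mem _) ha, ?_⟩
  rw [← mul_assoc, ← pow_add]; congr 2; omega
lemma cg.mem {m : ℕ} {f : RatFunc ℚ} (hf : cg d m f) : f ∈ Od d := by
  obtain ⟨a, ha, rfl⟩ := hf
  exact mul_mem (pow_mem pi_mem _) ha
lemma cg_zero {m : ℕ} : cg d m 0 := ⟨0, zero_mem _, by simp⟩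
lemma cg.sum {m : ℕ} {ι : Type*} (s : Finset ι) (f : ι → RatFunc ℚ) (h : ∀ i ∈ s, cg d m (f i)) :
    cg d m (∑ i ∈ s, f i) := by
  classical
  induction s using Finset.induction_on with
  | empty => simpa using cg_zero
  | insert a s ha ih =>
    rw [Finset.sum_insert ha]
    exact (h a (by simp)).add (ih fun i hi => h i (by simp [hi]))
lemma cg_pi : cg d 1 (1 - q ^ d) := ⟨1, one_mem _, by simp⟩
lemma cg_dvd (m : ℕ) (h : d ∣ m) : cg d 1 (1 - q ^ m) := by
  obtain ⟨k, rfl⟩ := h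
  refine ⟨∑ i ∈ range k, (q ^ d) ^ i, sum_mem fun i _ => pow_mem (pow_mem (q_mem d) _) _, ?_⟩
  rw [pow_one, mul_neg_geom_sum, pow_mul]
end

lemma cg_num (d : ℕ) [NeZero d] (m : ℕ) (f : RatFunc ℚ) (h : cg d m f) :
    ¬ Polynomial.cyclotomic d ℚ ∣ f.denom ∧ Polynomial.cyclotomic d ℚ ^ m ∣ f.num := by
  obtain ⟨_, ⟨r, s, hs, rfl⟩, hf⟩ := h
  have h1 : algebraMap (Polynomial ℚ) (RatFunc ℚ) s ≠ 0 := by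
    intro h; apply hs; rw [(map_eq_zero_iff _ (RatFunc.algebraMap_injective ℚ)).1 h]
    exact dvd_zero _
  have h2 : algebraMap (Polynomial ℚ) (RatFunc ℚ) f.denom ≠ 0 :=
    RatFunc.algebraMap_ne_zero f.denom_ne_zero
  have e : f.num * s = (1 - Polynomial.X ^ d) ^ m * r * f.denom := by
    apply RatFunc.algebraMap_injective ℚ
    have h3 := RatFunc.num_div_denom f
    rw [q_alg] at hf
    simp only [map_mul, map_pow, map_sub, map_one]
    rw [div_eq_iff h2] at h3
    rw [h3, hf]; field_simp
  have hd : ¬ Polynomial.cyclotomic d ℚ ∣ f.denom := by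
    intro h
    have : Polynomial.cyclotomic d ℚ ∣ f.num * s := by rw [e]; exact h.mul_left _
    rcases (cyc_prime d).dvd_or_dvd this with h' | h'
    · exact (cyc_prime d).not_isUnit ((RatFunc.isCoprime_num_denom f).isUnit_of_dvd' h' h)
    · exact hs h'
  refine ⟨hd, ?_⟩
  apply (cyc_prime d).pow_dvd_of_dvd_mul_right m hs
  rw [e]
  exact ((pow_dvd_pow_of_dvd (cyc_dvd d) m).mul_right _).mul_right _

lemma qcong_of (n : ℕ) (hn : 1 < n) (f g : RatFunc ℚ)
    (h5 : ∀ [NeZero n], cg n 5 (f - g))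
    (h1 : ∀ d, 1 < d → d < n → d ∣ n → ∀ [NeZero d], cg d 1 (f - g)) :
    qcong f g ((∑ i ∈ Finset.range n, Polynomial.X ^ i) * Polynomial.cyclotomic n ℚ ^ 4) := by
  haveI : NeZero n := ⟨by omega⟩
  have hprod : ((∑ i ∈ Finset.range n, Polynomial.X ^ i) * Polynomial.cyclotomic n ℚ ^ 4) =
      ∏ d ∈ n.divisors.erase 1, Polynomial.cyclotomic d ℚ ^ (if d = n then 5 else 1) := by
    rw [← Polynomial.prod_cyclotomic_eq_geom_sum (by omega) ℚ]
    have hmem : n ∈ n.divisors.erase 1 := by simp; omega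
    rw [← Finset.mul_prod_erase _ _ hmem, ← Finset.mul_prod_erase _ _ hmem]
    rw [Finset.prod_congr rfl (g := fun d => Polynomial.cyclotomic d ℚ) (s₁ := (n.divisors.erase 1).erase n) (f := fun d => Polynomial.cyclotomic d ℚ ^ (if d = n then 5 else 1))]
    · simp; ring
    · intro d hd
      simp only [Finset.mem_erase] at hd
      simp [hd.1]
  have hall : ∀ d ∈ n.divisors.erase 1, ¬ Polynomial.cyclotomic d ℚ ∣ (f - g).denom ∧
      Polynomial.cyclotomic d ℚ ^ (if d = n then 5 else 1) ∣ (f - g).num := by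
    intro d hd
    simp only [Finset.mem_erase, Nat.mem_divisors] at hd
    have hd0 : 0 < d := Nat.pos_of_dvd_of_pos hd.2.1 (by omega)
    haveI : NeZero d := ⟨by omega⟩
    by_cases hdn : d = n
    · subst hdn; simp only [if_true]; exact cg_num _ 5 _ h5
    · simp only [hdn, if_false]
      exact cg_num _ 1 _ (h1 d (by omega) (lt_of_le_of_ne (Nat.le_of_dvd (by omega) hd.2.1) hdn) hd.2.1)
  have hdvd : ((∑ i ∈ Finset.range n, Polynomial.X ^ i) * Polynomial.cyclotomic n ℚ ^ 4) ∣ (f - g).num := by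
    rw [hprod]
    apply Finset.prod_dvd_of_coprime
    · intro a ha b hb hab
      apply IsCoprime.pow
      exact Polynomial.cyclotomic.isCoprime_rat hab
    · exact fun d hd => (hall d hd).2
  obtain ⟨r, hr⟩ := hdvd
  refine ⟨r, (f - g).denom, ?_, ?_⟩
  · rw [hprod]
    apply IsCoprime.prod_right
    intro d hd
    apply IsCoprime.pow_right
    have hd' := hd
    simp only [Finset.mem_erase, Nat.mem_divisors] at hd'
    have hd0 : 0 < d := Nat.pos_of_dvd_of_pos hd'.2.1 (by omega)
    exact (((Polynomial.cyclotomic.irreducible_rat hd0).coprime_iff_not_dvd).2 (hall d hd).1).symm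
  · rw [← mul_div_assoc, ← map_mul, ← hr, RatFunc.num_div_denom]

lemma qk_ne (m : ℕ) : q ^ m ≠ 0 := pow_ne_zero _ q_ne
lemma one_sub_qn (m : ℕ) (hm : 0 < m) : 1 - q ^ m ≠ 0 := by
  intro h; exact qpow_ne_one m hm (by linear_combination -h)

/-- x-part -/
noncomputable def xx (k : ℕ) : RatFunc ℚ := ∏ j ∈ range k, ((1 - q ^ (2 * j + 1)) / (1 - q ^ (2 * j + 2)))
/-- y-part -/
noncomputable def yy (k : ℕ) : RatFunc ℚ := ∏ j ∈ range k, ((1 - q ^ (4 * j + 2)) / (1 - q ^ (4 * j + 4)))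
/-- g-part -/
noncomputable def gg (u : RatFunc ℚ) (k : ℕ) : RatFunc ℚ :=
  ∏ j ∈ range k, ((1 - u * q ^ (2 * j + 1) + q ^ (4 * j + 2)) / (1 - u * q ^ (2 * j + 2) + q ^ (4 * j + 4)))
/-- coefficient -/
noncomputable def CC (k : ℕ) : RatFunc ℚ := (-1) ^ k * qint (4 * k + 1) * yy k * q ^ k
/-- summand -/
noncomputable def cc (k : ℕ) : RatFunc ℚ := CC k * xx k ^ 4
/-- u0 -/
noncomputable def uu (N : ℕ) : RatFunc ℚ := q ^ (2 * N + 1) + 1 / q ^ (2 * N + 1)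
/-- F -/
noncomputable def FF (N : ℕ) (u : RatFunc ℚ) : RatFunc ℚ :=
  qint (2 * N + 1) * (-1) ^ N * q ^ (N ^ 2) *
    ((∏ i ∈ range N, (1 - u * q ^ (2 - 2 * (N : ℤ) + 4 * i) + (q ^ (2 - 2 * (N : ℤ) + 4 * i)) ^ 2)) /
    ∏ j ∈ range N, (1 - u * q ^ (2 * j + 2) + q ^ (4 * j + 4)))

lemma gg_two (k : ℕ) : gg 2 k = xx k ^ 2 := by
  unfold gg xx
  rw [← prod_pow]
  apply prod_congr rfl
  intro j _
  rw [div_pow]; congr 1 <;> ring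

lemma uu_fac (N : ℕ) (X : RatFunc ℚ) : 1 - uu N * X + X ^ 2 = (1 - q ^ (2 * N + 1) * X) * (1 - X / q ^ (2 * N + 1)) := by
  have := qk_ne (2 * N + 1)
  unfold uu; field_simp; ring

lemma W_eq (N : ℕ) : pc (q ^ 2) (q / (q ^ 2) ^ N) (2 * N) = (-1) ^ N * (pc (q ^ 2) q N) ^ 2 / q ^ (N ^ 2) := by
  induction N with
  | zero => simp [pc]
  | succ N ih =>
    have e : 2 * (N + 1) = 2 * N + 1 + 1 := by ring
    have e2 : q / (q ^ 2) ^ (N + 1) * q ^ 2 = q / (q ^ 2) ^ N := by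
      have := q_ne; field_simp; ring
    rw [e, pc_succ', e2, pc_succ, ih, pc_succ]
    have := q_ne
    field_simp
    ring

lemma pc_q_ne (N : ℕ) : pc (q ^ 2) q N ≠ 0 := by
  apply pc_ne
  intro i _
  have : q * (q ^ 2) ^ i = q ^ (2 * i + 1) := by ring
  rw [this]; exact one_sub_qn _ (by omega)

lemma F_pre (N : ℕ) : pc (q ^ 2) (q * q ^ 2) N * pc (q ^ 2) q N / pc (q ^ 2) (q / (q ^ 2) ^ N) (2 * N)
    = qint (2 * N + 1) * (-1) ^ N * q ^ (N ^ 2) := by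
  have h1 := pc_shift (q ^ 2) q N
  have h2 : qint (2 * N + 1) = (1 - q * (q ^ 2) ^ N) / (1 - q) := by
    unfold qint; congr 2
    rw [← pow_mul, ← pow_succ']; norm_cast
  have h3 := pc_q_ne N
  have h4 := one_sub_q
  have h5 := qk_ne (N ^ 2)
  have h6 : ((-1 : RatFunc ℚ) ^ N) * (-1) ^ N = 1 := by rw [← mul_pow]; simp
  have h7 : ((-1 : RatFunc ℚ) ^ N) ≠ 0 := by simp
  rw [W_eq, h2]
  have h8 : pc (q ^ 2) (q * q ^ 2) N = pc (q ^ 2) q N * (1 - q * (q ^ 2) ^ N) / (1 - q) := by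
    rw [h1]; field_simp
  rw [h8]
  field_simp
  linear_combination (-(1 - q * (q ^ 2) ^ N)) * h6

lemma tm_eq (N : ℕ) (u : RatFunc ℚ) (hu : ∀ j, j < N → 1 - u * q ^ (2 * j + 2) + q ^ (4 * j + 4) ≠ 0)
    (k : ℕ) (hk : k ≤ N) :
    tm (q ^ 2) q (q * u) N k = CC k * gg (uu N) k * gg u k *
      ∏ j ∈ range N, (1 - u * q ^ (2 * j + 2) + q ^ (4 * j + 4)) := by
  unfold tm CC
  have e1 : (1 - q * ((q ^ 2) ^ k) ^ 2) / (1 - q) = qint (4 * k + 1) := by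
    unfold qint; congr 2
    rw [← pow_mul, ← pow_mul, ← pow_succ']
    have : (4 * (k : ℤ) + 1) = ((4 * k + 1 : ℕ) : ℤ) := by push_cast; ring
    rw [this, zpow_natCast]; congr 1; ring
  have e2 : pc ((q ^ 2) ^ 2) (q ^ 2) k / pc ((q ^ 2) ^ 2) ((q ^ 2) ^ 2) k = yy k := by
    unfold pc yy; rw [← prod_div_distrib]; apply prod_congr rfl
    intro j _; congr 1 <;> ring
  have e3 : pc (q ^ 2) (1 / (q ^ 2) ^ N) k * pc (q ^ 2) (q ^ 2 * (q ^ 2) ^ N) k /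
      (pc (q ^ 2) (q * q ^ 2 * (q ^ 2) ^ N) k * pc (q ^ 2) (q / (q ^ 2) ^ N) k) = gg (uu N) k := by
    unfold pc gg; rw [← prod_mul_distrib, ← prod_mul_distrib, ← prod_div_distrib]
    apply prod_congr rfl
    intro j _
    have a1 : (q : RatFunc ℚ) ^ (4 * j + 2) = (q ^ (2 * j + 1)) ^ 2 := by ring
    have a2 : (q : RatFunc ℚ) ^ (4 * j + 4) = (q ^ (2 * j + 2)) ^ 2 := by ring
    rw [a1, a2, uu_fac, uu_fac]
    have := q_ne
    congr 1
    · rw [mul_comm]; congr 1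
      · ring
      · field_simp; ring
    · congr 1
      · ring
      · field_simp; ring
  have e4 : (∏ i ∈ range k, (1 - q * u * (q ^ 2) ^ i + q ^ 2 * ((q ^ 2) ^ i) ^ 2)) *
      (∏ i ∈ Ico k N, (1 - q * (q * u) * (q ^ 2) ^ i + q ^ 2 * q ^ 2 * ((q ^ 2) ^ i) ^ 2)) =
      gg u k * ∏ j ∈ range N, (1 - u * q ^ (2 * j + 2) + q ^ (4 * j + 4)) := by
    rw [← prod_range_mul_prod_Ico _ hk, gg]
    refine Eq.trans ?_ (mul_assoc _ _ _)
    congr 1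
    · rw [← prod_mul_distrib]; apply prod_congr rfl
      intro j hj
      rw [div_mul_cancel₀ _ (hu j (by simp at hj; omega))]; ring
    · apply prod_congr rfl; intro j _; ring
  rw [e3, ← e1] 
  rw [mul_div_assoc, e2]
  rw [neg_pow]
  linear_combination ((1 - q * ((q ^ 2) ^ k) ^ 2) / (1 - q) * yy k * gg (uu N) k * ((-1) ^ k * q ^ k)) * e4

lemma spec (N : ℕ) (u : RatFunc ℚ) (hu : ∀ j, j < N → 1 - u * q ^ (2 * j + 2) + q ^ (4 * j + 4) ≠ 0) :
    ∑ k ∈ range (N + 1), CC k * gg (uu N) k * gg u k = FF N u := by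
  have hz : ∀ m : ℤ, q * (q ^ 2) ^ m = q ^ (2 * m + 1) := by
    intro m
    rw [zpow_add₀ q_ne, zpow_mul, zpow_one]
    rw [mul_comm]; rfl
  have h := ident (q ^ 2) (q * u) (qk_ne 2) (fun m hm => by rw [← pow_mul]; exact qpow_ne_one _ (by omega)) N q
    (fun m => by rw [hz]; exact qz_ne_one _ (by omega)) (fun m => by rw [hz]; exact qz_ne_neg_one _)
  rw [F_pre, sum_congr rfl (fun k hk => tm_eq N u hu k (by simp at hk; omega)), ← sum_mul] at h
  have hD : ∏ j ∈ range N, (1 - u * q ^ (2 * j + 2) + q ^ (4 * j + 4)) ≠ 0 := by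
    rw [prod_ne_zero_iff]; intro j hj; exact hu j (by simpa using hj)
  unfold FF
  rw [← mul_div_assoc, eq_div_iff hD, h]
  congr 1
  apply prod_congr rfl
  intro i _
  have e : q ^ (2 - 2 * (N : ℤ) + 4 * i) = q ^ 2 * ((q ^ 2) ^ (2 * i) / (q ^ 2) ^ N) := by
    rw [zpow_add₀ q_ne, zpow_sub₀ q_ne, ← pow_mul, ← pow_mul]
    rw [show (2 * (N : ℤ)) = ((2 * N : ℕ) : ℤ) by push_cast; ring, show (4 * (i : ℤ)) = ((4 * i : ℕ) : ℤ) by push_cast; ring, zpow_natCast, zpow_natCast]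
    rw [show 2 * (2 * i) = 4 * i by ring]
    have : (q : RatFunc ℚ) ^ (2 : ℤ) = q ^ 2 := rfl
    rw [this]; ring
  rw [e]; ring

lemma qint_nat (m : ℕ) : qint (m : ℤ) = (1 - q ^ m) / (1 - q) := by
  unfold qint; rw [zpow_natCast]
lemma qint_2N (N : ℕ) : qint (2 * (N : ℤ) + 1) = (1 - q ^ (2 * N + 1)) / (1 - q) := by
  rw [← qint_nat]; push_cast; rfl
lemma qint_4k (k : ℕ) : qint (4 * (k : ℤ) + 1) = (1 - q ^ (4 * k + 1)) / (1 - q) := by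
  rw [← qint_nat]; push_cast; rfl
lemma one_sub_qneg (m : ℕ) : 1 - q ^ (-(m : ℤ)) = - (1 - q ^ m) / q ^ m := by
  have := qk_ne m
  rw [zpow_neg, zpow_natCast]; field_simp; ring

lemma summand_eq (k : ℕ) : (-1 : RatFunc ℚ) ^ k * qint (4 * k + 1) *
            (qpoch q (q ^ 2) k ^ 4 * qpoch (q ^ 2) (q ^ 4) k /
              (qpoch (q ^ 2) (q ^ 2) k ^ 4 * qpoch (q ^ 4) (q ^ 4) k)) * q ^ k = cc k := by
  have e1 : qpoch q (q ^ 2) k / qpoch (q ^ 2) (q ^ 2) k = xx k := by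
    unfold qpoch xx; rw [← prod_div_distrib]; apply prod_congr rfl; intro j _; congr 1 <;> ring
  have e2 : qpoch (q ^ 2) (q ^ 4) k / qpoch (q ^ 4) (q ^ 4) k = yy k := by
    unfold qpoch yy; rw [← prod_div_distrib]; apply prod_congr rfl; intro j _; congr 1 <;> ring
  unfold cc CC
  rw [← e1, ← e2, mul_div_mul_comm, div_pow]; ring

lemma yyK_eq (K : ℕ) : qpoch (q ^ 2) (q ^ 4) K ^ 2 / qpoch (q ^ 4) (q ^ 4) K ^ 2 = yy K ^ 2 := by
  rw [← div_pow]; congr 1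
  unfold qpoch yy; rw [← prod_div_distrib]; apply prod_congr rfl; intro j _; congr 1 <;> ring

lemma prodX (K : ℕ) : ∏ i ∈ range (2 * K), (1 - q ^ (2 - 4 * (K : ℤ) + 4 * i)) =
    (-1) ^ K * (∏ j ∈ range K, (1 - q ^ (4 * j + 2))) ^ 2 / q ^ (2 * K ^ 2) := by
  induction K with
  | zero => simp
  | succ K ih =>
    rw [show 2 * (K + 1) = 2 * K + 1 + 1 by ring, prod_range_succ', prod_range_succ, prod_range_succ]
    have e : ∀ i : ℕ, (2 - 4 * ((K + 1 : ℕ) : ℤ) + 4 * ((i + 1 : ℕ) : ℤ)) = 2 - 4 * K + 4 * i := by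
      intro i; push_cast; ring
    simp only [e]
    rw [ih]
    have e2 : (2 - 4 * (K : ℤ) + 4 * ((2 * K : ℕ) : ℤ)) = ((4 * K + 2 : ℕ) : ℤ) := by push_cast; ring
    have e3 : (2 - 4 * ((K + 1 : ℕ) : ℤ) + 4 * ((0 : ℕ) : ℤ)) = -((4 * K + 2 : ℕ) : ℤ) := by push_cast; ring
    rw [e2, e3, one_sub_qneg, zpow_natCast]
    have := q_ne
    field_simp
    ring

lemma prodD (K : ℕ) : ∏ j ∈ range (2 * K), (1 - q ^ (2 * j + 2)) =
    (∏ j ∈ range K, (1 - q ^ (4 * j + 2))) * ∏ j ∈ range K, (1 - q ^ (4 * j + 4)) := by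
  induction K with
  | zero => simp
  | succ K ih =>
    rw [show 2 * (K + 1) = 2 * K + 1 + 1 by ring, prod_range_succ, prod_range_succ, ih, prod_range_succ, prod_range_succ]
    ring

lemma FF_two (K : ℕ) : FF (2 * K) 2 = qint (2 * ((2 * K : ℕ) : ℤ) + 1) * yy K ^ 2 := by
  unfold FF yy
  have e1 : ∏ i ∈ range (2 * K), (1 - 2 * q ^ (2 - 2 * ((2 * K : ℕ) : ℤ) + 4 * i) + (q ^ (2 - 2 * ((2 * K : ℕ) : ℤ) + 4 * i)) ^ 2)
    = (∏ i ∈ range (2 * K), (1 - q ^ (2 - 4 * (K : ℤ) + 4 * i))) ^ 2 := by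
    rw [← prod_pow]; apply prod_congr rfl; intro i _
    rw [show (2 - 2 * ((2 * K : ℕ) : ℤ) + 4 * i) = (2 - 4 * (K : ℤ) + 4 * i) by push_cast; ring]
    ring
  have e2 : ∏ j ∈ range (2 * K), (1 - 2 * q ^ (2 * j + 2) + q ^ (4 * j + 4)) = (∏ j ∈ range (2 * K), (1 - q ^ (2 * j + 2))) ^ 2 := by
    rw [← prod_pow]; apply prod_congr rfl; intro i _; ring
  rw [e1, e2, prodX, prodD, prod_div_distrib]
  have hA : ∏ j ∈ range K, (1 - q ^ (4 * j + 2)) ≠ 0 := by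
    rw [prod_ne_zero_iff]; intro j _; exact one_sub_qn _ (by omega)
  have hB : ∏ j ∈ range K, (1 - q ^ (4 * j + 4)) ≠ 0 := by
    rw [prod_ne_zero_iff]; intro j _; exact one_sub_qn _ (by omega)
  have hq := q_ne
  rw [pow_mul, show (-1 : RatFunc ℚ) ^ 2 = 1 by norm_num, one_pow]
  have h6 : ((-1 : RatFunc ℚ) ^ K) ^ 2 = 1 := by rw [← pow_mul, mul_comm, pow_mul]; simp
  rw [div_pow, mul_pow ((-1) ^ K), h6]
  field_simp
  try ring

lemma FF_two_odd (K : ℕ) : FF (2 * K + 1) 2 = 0 := by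
  unfold FF
  rw [prod_eq_zero (i := K) (by simp; omega)]
  · simp
  · have : (2 - 2 * ((2 * K + 1 : ℕ) : ℤ) + 4 * K) = 0 := by push_cast; ring
    rw [this]; norm_num

lemma prodR1 (N : ℕ) : ∏ i ∈ range N, (1 - q ^ (1 - 4 * (N : ℤ) + 4 * i)) =
    (-1) ^ N * (∏ i ∈ range N, (1 - q ^ (4 * i + 3))) / q ^ (2 * N ^ 2 + N) := by
  induction N with
  | zero => simp
  | succ N ih =>
    rw [prod_range_succ', prod_range_succ]
    have e : ∀ i : ℕ, (1 - 4 * ((N + 1 : ℕ) : ℤ) + 4 * ((i + 1 : ℕ) : ℤ)) = 1 - 4 * N + 4 * i := by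
      intro i; push_cast; ring
    simp only [e]
    have e3 : (1 - 4 * ((N + 1 : ℕ) : ℤ) + 4 * ((0 : ℕ) : ℤ)) = -((4 * N + 3 : ℕ) : ℤ) := by push_cast; ring
    rw [ih, e3, one_sub_qneg]
    have := q_ne
    field_simp
    ring

lemma prodR2 (N : ℕ) : ∏ i ∈ range N, (1 - q ^ (1 - 2 * (N : ℤ) + 2 * i)) =
    (-1) ^ N * (∏ i ∈ range N, (1 - q ^ (2 * i + 1))) / q ^ (N ^ 2) := by
  induction N with
  | zero => simp
  | succ N ih =>
    rw [prod_range_succ', prod_range_succ]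
    have e : ∀ i : ℕ, (1 - 2 * ((N + 1 : ℕ) : ℤ) + 2 * ((i + 1 : ℕ) : ℤ)) = 1 - 2 * N + 2 * i := by
      intro i; push_cast; ring
    simp only [e]
    have e3 : (1 - 2 * ((N + 1 : ℕ) : ℤ) + 2 * ((0 : ℕ) : ℤ)) = -((2 * N + 1 : ℕ) : ℤ) := by push_cast; ring
    rw [ih, e3, one_sub_qneg]
    have := q_ne
    field_simp
    ring

lemma prodO (N : ℕ) : ∏ j ∈ range (2 * N + 1), (1 - q ^ (2 * j + 1)) =
    (1 - q) * (∏ j ∈ range N, (1 - q ^ (4 * j + 3))) * ∏ j ∈ range N, (1 - q ^ (4 * j + 5)) := by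
  induction N with
  | zero => simp
  | succ K ih =>
    rw [show 2 * (K + 1) + 1 = 2 * K + 1 + 1 + 1 by ring, prod_range_succ, prod_range_succ, ih, prod_range_succ, prod_range_succ]
    ring

lemma prodO' (N : ℕ) : (∏ j ∈ range N, (1 - q ^ (2 * j + 1))) * (1 - q ^ (2 * N + 1)) *
    (∏ j ∈ range N, (1 - q ^ (2 * N + 2 * j + 3))) =
    (1 - q) * (∏ j ∈ range N, (1 - q ^ (4 * j + 3))) * ∏ j ∈ range N, (1 - q ^ (4 * j + 5)) := by
  rw [← prodO, show 2 * N + 1 = (N + 1) + N by ring, prod_range_add, prod_range_succ]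
  congr 1
  · congr 2; ring
  · apply prod_congr rfl; intro i _; congr 2; ring

lemma FF_uu (N : ℕ) : FF N (uu N) = (-1) ^ N * qint (2 * N + 1) ^ 2 / q ^ N *
    ((∏ j ∈ range N, (1 - q ^ (4 * j + 3))) / ∏ j ∈ range N, (1 - q ^ (4 * j + 5))) := by
  unfold FF
  have e1 : ∏ i ∈ range N, (1 - uu N * q ^ (2 - 2 * (N : ℤ) + 4 * i) + (q ^ (2 - 2 * (N : ℤ) + 4 * i)) ^ 2) =
      (∏ j ∈ range N, (1 - q ^ (4 * j + 3))) * ∏ i ∈ range N, (1 - q ^ (1 - 4 * (N : ℤ) + 4 * i)) := by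
    rw [← prod_mul_distrib]; apply prod_congr rfl; intro i _
    rw [uu_fac]
    congr 2
    · rw [← zpow_natCast, ← zpow_natCast, ← zpow_add₀ q_ne]; congr 1; push_cast; ring
    · rw [← zpow_natCast, ← zpow_sub₀ q_ne]; congr 1; push_cast; ring
  have e2 : ∏ j ∈ range N, (1 - uu N * q ^ (2 * j + 2) + q ^ (4 * j + 4)) =
      (∏ j ∈ range N, (1 - q ^ (2 * N + 2 * j + 3))) * ∏ i ∈ range N, (1 - q ^ (1 - 2 * (N : ℤ) + 2 * i)) := by
    rw [← prod_mul_distrib]; apply prod_congr rfl; intro i _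
    rw [show q ^ (4 * i + 4) = (q ^ (2 * i + 2)) ^ 2 by ring, uu_fac]
    congr 2
    · ring
    · rw [← zpow_natCast, ← zpow_natCast, ← zpow_sub₀ q_ne]; congr 1; push_cast; ring
  rw [e1, e2, prodR1, prodR2, qint_2N]
  have h := prodO' N
  have h1 : ∏ j ∈ range N, (1 - q ^ (2 * j + 1)) ≠ 0 := by
    rw [prod_ne_zero_iff]; intro j _; exact one_sub_qn _ (by omega)
  have h2 : ∏ j ∈ range N, (1 - q ^ (2 * N + 2 * j + 3)) ≠ 0 := by
    rw [prod_ne_zero_iff]; intro j _; exact one_sub_qn _ (by omega)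
  have h3 : ∏ j ∈ range N, (1 - q ^ (4 * j + 3)) ≠ 0 := by
    rw [prod_ne_zero_iff]; intro j _; exact one_sub_qn _ (by omega)
  have h4 : ∏ j ∈ range N, (1 - q ^ (4 * j + 5)) ≠ 0 := by
    rw [prod_ne_zero_iff]; intro j _; exact one_sub_qn _ (by omega)
  have hq := q_ne
  have h5 := one_sub_q
  have h7 : ((-1 : RatFunc ℚ) ^ N) ≠ 0 := by simp
  have h6 : q ^ (2 * N ^ 2 + N) = q ^ (N ^ 2) * q ^ (N ^ 2) * q ^ N := by ring
  rw [h6]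
  generalize (∏ j ∈ range N, (1 - q ^ (2 * j + 1))) = P1 at *
  generalize (∏ j ∈ range N, (1 - q ^ (2 * N + 2 * j + 3))) = P2 at *
  generalize (∏ j ∈ range N, (1 - q ^ (4 * j + 3))) = P3 at *
  generalize (∏ j ∈ range N, (1 - q ^ (4 * j + 5))) = P5 at *
  generalize q ^ (2 * N + 1) = t at *
  generalize ((-1 : RatFunc ℚ) ^ N) = s at *
  generalize hA : q ^ (N ^ 2) = A at *
  generalize hB : q ^ N = B at *
  have hA' : A ≠ 0 := by rw [← hA]; exact qk_ne _
  have hB' : B ≠ 0 := by rw [← hB]; exact qk_ne _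
  field_simp
  first | linear_combination h | linear_combination -h | linear_combination (1-t) * h | linear_combination -(1-t) * h

section
variable {d : ℕ} [NeZero d]

variable (d) in
/-- congruence mod π between integral elements -/
def ev (f g : RatFunc ℚ) : Prop := f ∈ Od d ∧ g ∈ Od d ∧ cg d 1 (f - g)

lemma ev.refl {f : RatFunc ℚ} (h : f ∈ Od d) : ev d f f := ⟨h, h, by simpa using cg_zero⟩
lemma ev.symm {f g : RatFunc ℚ} (h : ev d f g) : ev d g f := ⟨h.2.1, h.1, by simpa using h.2.2.neg⟩
lemma ev.trans {f g k : RatFunc ℚ} (h : ev d f g) (h' : ev d g k) : ev d f k :=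
  ⟨h.1, h'.2.1, by simpa using h.2.2.add h'.2.2⟩
lemma ev.add {f g f' g' : RatFunc ℚ} (h : ev d f g) (h' : ev d f' g') : ev d (f + f') (g + g') :=
  ⟨add_mem h.1 h'.1, add_mem h.2.1 h'.2.1, by
    rw [add_sub_add_comm]; exact h.2.2.add h'.2.2⟩
lemma ev.neg {f g : RatFunc ℚ} (h : ev d f g) : ev d (-f) (-g) :=
  ⟨neg_mem h.1, neg_mem h.2.1, by
    rw [show -f - -g = -(f - g) by ring]; exact h.2.2.neg⟩
lemma ev.sub {f g f' g' : RatFunc ℚ} (h : ev d f g) (h' : ev d f' g') : ev d (f - f') (g - g') := by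
  rw [sub_eq_add_neg, sub_eq_add_neg]; exact h.add h'.neg
lemma ev.mul {f g f' g' : RatFunc ℚ} (h : ev d f g) (h' : ev d f' g') : ev d (f * f') (g * g') :=
  ⟨mul_mem h.1 h'.1, mul_mem h.2.1 h'.2.1, by
    rw [show f * f' - g * g' = (f - g) * f' + g * (f' - g') by ring]
    exact (h.2.2.mulO h'.1).add (h'.2.2.Omul h.2.1)⟩
lemma ev.pow {f g : RatFunc ℚ} (h : ev d f g) (m : ℕ) : ev d (f ^ m) (g ^ m) := by
  induction m with
  | zero => simpa using ev.refl (one_mem _)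
  | succ m ih => rw [pow_succ, pow_succ]; exact ih.mul h
lemma ev.inv {f g : RatFunc ℚ} (h : ev d f g) (hf : f⁻¹ ∈ Od d) (hg : g⁻¹ ∈ Od d) (hf0 : f ≠ 0) (hg0 : g ≠ 0) :
    ev d f⁻¹ g⁻¹ := ⟨hf, hg, by
    rw [show f⁻¹ - g⁻¹ = (f - g) * (- f⁻¹ * g⁻¹) by field_simp; ring]
    exact h.2.2.mulO (mul_mem (neg_mem hf) hg)⟩
lemma ev.prod {ι : Type*} (s : Finset ι) (f g : ι → RatFunc ℚ) (h : ∀ i ∈ s, ev d (f i) (g i)) :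
    ev d (∏ i ∈ s, f i) (∏ i ∈ s, g i) := by
  classical
  induction s using Finset.induction_on with
  | empty => simpa using ev.refl (one_mem _)
  | insert a s ha ih =>
    rw [Finset.prod_insert ha, Finset.prod_insert ha]
    exact (h a (by simp)).mul (ih fun i hi => h i (by simp [hi]))
lemma ev.sum {ι : Type*} (s : Finset ι) (f g : ι → RatFunc ℚ) (h : ∀ i ∈ s, ev d (f i) (g i)) :
    ev d (∑ i ∈ s, f i) (∑ i ∈ s, g i) := by
  classical
  induction s using Finset.induction_on with
  | empty => simpa using ev.refl (zero_mem _)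
  | insert a s ha ih =>
    rw [Finset.sum_insert ha, Finset.sum_insert ha]
    exact (h a (by simp)).add (ih fun i hi => h i (by simp [hi]))

lemma ev_q (m m' : ℤ) (h : (d : ℤ) ∣ m - m') : ev d (q ^ m) (q ^ m') := by
  refine ⟨qz_mem d m, qz_mem d m', ?_⟩
  obtain ⟨c, hc⟩ := h
  have key : ∀ (c : ℕ) (m' : ℤ), cg d 1 (q ^ (m' + d * c) - q ^ m') := by
    intro c m'
    have e : q ^ (m' + d * c) - q ^ m' = (1 - q ^ (d * c)) * (- q ^ m') := by
      rw [zpow_add₀ q_ne]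
      have : q ^ ((d : ℤ) * c) = q ^ (d * c) := by rw [← zpow_natCast]; push_cast; rfl
      rw [this]; ring
    rw [e]
    exact (cg_dvd _ (Dvd.intro _ rfl)).mulO (neg_mem (qz_mem d m'))
  obtain ⟨k, rfl | rfl⟩ := c.eq_nat_or_neg
  · have := key k m'
    rwa [show m' + d * k = m by linarith] at this
  · have := (key k m).neg
    rw [show m + d * (k : ℤ) = m' by linarith] at this
    simpa using this

lemma ev_one_sub (m m' : ℤ) (h : (d : ℤ) ∣ m - m') : ev d (1 - q ^ m) (1 - q ^ m') :=
  (ev.refl (one_mem _)).sub (ev_q m m' h)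

lemma ev_one_sub_inv (m m' : ℤ) (h : (d : ℤ) ∣ m - m') (hm : ¬ (d : ℤ) ∣ m) :
    ev d (1 - q ^ m)⁻¹ (1 - q ^ m')⁻¹ := by
  have hm' : ¬ (d : ℤ) ∣ m' := fun h' => hm (by have := dvd_add h h'; simpa using this)
  refine (ev_one_sub m m' h).inv (one_sub_inv_mem d m hm) (one_sub_inv_mem d m' hm') (one_sub_qz _ ?_) (one_sub_qz _ ?_)
  · rintro rfl; simp at hm
  · rintro rfl; simp at hm'

lemma ev_ratio (m m' l l' : ℤ) (h : (d : ℤ) ∣ m - m') (hl : (d : ℤ) ∣ l - l') (hm : ¬ (d : ℤ) ∣ l) :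
    ev d ((1 - q ^ m) / (1 - q ^ l)) ((1 - q ^ m') / (1 - q ^ l')) := by
  rw [div_eq_mul_inv, div_eq_mul_inv]
  exact (ev_one_sub m m' h).mul (ev_one_sub_inv l l' hl hm)

/-- w -/
noncomputable def ww (m : ℤ) : RatFunc ℚ := q ^ m / (1 - q ^ m) ^ 2
lemma ww_neg (m : ℤ) : ww (-m) = ww m := by
  unfold ww
  have h : q ^ m ≠ 0 := zpow_ne_zero _ q_ne
  rw [zpow_neg]
  by_cases h1 : 1 - q ^ m = 0
  · have : q ^ m = 1 := by linear_combination -h1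
    rw [this]; simp
  have : 1 - (q ^ m)⁻¹ ≠ 0 := by
    intro h2; apply h1; field_simp at h2; linear_combination -h2
  have h3 : q ^ m - 1 ≠ 0 := fun h3 => h1 (by linear_combination -h3)
  have e : 1 - (q ^ m)⁻¹ = -(1 - q ^ m) / q ^ m := by field_simp; ring
  rw [e]
  field_simp
lemma ev_ww (m m' : ℤ) (h : (d : ℤ) ∣ m - m') (hm : ¬ (d : ℤ) ∣ m) : ev d (ww m) (ww m') := by
  unfold ww
  rw [div_eq_mul_inv, div_eq_mul_inv, ← inv_pow, ← inv_pow]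
  exact (ev_q m m' h).mul ((ev_one_sub_inv m m' h hm).pow 2)
lemma ww_mem (m : ℤ) (hm : ¬ (d : ℤ) ∣ m) : ww m ∈ Od d := (ev_ww m m (by simp) hm).1

lemma half_mem : (2 : RatFunc ℚ)⁻¹ ∈ Od d := by
  have := alg_mem d (Polynomial.C (2 : ℚ)⁻¹)
  simpa using this

lemma antisym (h : ℕ) (f : ℕ → RatFunc ℚ) (hf : ∀ k, k ≤ h → ev d (f (h - k)) (-f k)) :
    cg d 1 (∑ k ∈ range (h + 1), f k) := by
  have h1 := ev.sum (d := d) (range (h + 1)) (fun k => f (h - k)) (fun k => - f k) (fun k hk => hf k (by simp at hk; omega))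
  have h2 : ∑ k ∈ range (h + 1), f (h - k) = ∑ k ∈ range (h + 1), f k := by
    have := Finset.sum_range_reflect f (h + 1)
    simpa using this
  rw [h2, sum_neg_distrib] at h1
  have h3 := h1.2.2.mulO (half_mem (d := d))
  have e : (∑ k ∈ range (h + 1), f k - -∑ k ∈ range (h + 1), f k) * (2 : RatFunc ℚ)⁻¹ = ∑ k ∈ range (h + 1), f k := by ring
  rwa [e] at h3
end

lemma xx_succ (k : ℕ) : xx (k + 1) = xx k * ((1 - q ^ (2 * (k : ℤ) + 1)) / (1 - q ^ (2 * (k : ℤ) + 2))) := by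
  unfold xx; rw [prod_range_succ]; congr 3
lemma yy_succ (k : ℕ) : yy (k + 1) = yy k * ((1 - q ^ (4 * (k : ℤ) + 2)) / (1 - q ^ (4 * (k : ℤ) + 4))) := by
  unfold yy; rw [prod_range_succ]; congr 3


lemma dv2 {d : ℕ} (h : ℕ) (hd : d = 2 * h + 1) (j : ℕ) (hj : j + 1 < d) : ¬ (d : ℤ) ∣ 2 * j + 2 := by
  intro hh
  have : (d : ℤ) ∣ ((2 * (j + 1) : ℕ) : ℤ) := by push_cast; convert hh using 1; ring
  rw [Int.natCast_dvd_natCast] at this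
  have h2 : Nat.Coprime d 2 := by rw [hd]; simp
  have := Nat.le_of_dvd (by omega) (h2.dvd_of_dvd_mul_left this)
  omega
lemma dv4 {d : ℕ} (h : ℕ) (hd : d = 2 * h + 1) (j : ℕ) (hj : j + 1 < d) : ¬ (d : ℤ) ∣ 4 * j + 4 := by
  intro hh
  have : (d : ℤ) ∣ ((4 * (j + 1) : ℕ) : ℤ) := by push_cast; convert hh using 1; ring
  rw [Int.natCast_dvd_natCast] at this
  have h2 : Nat.Coprime d 2 := by rw [hd]; simp
  have h4 : Nat.Coprime d (2 ^ 2) := h2.pow_right 2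
  have := Nat.le_of_dvd (by omega) (h4.dvd_of_dvd_mul_left this)
  omega

lemma ratio_flip (m l : ℤ) : (1 - q ^ (-m)) / (1 - q ^ (-l)) = q ^ (l - m) * ((1 - q ^ m) / (1 - q ^ l)) := by
  have hm : q ^ m ≠ 0 := zpow_ne_zero _ q_ne
  have hl : q ^ l ≠ 0 := zpow_ne_zero _ q_ne
  rw [zpow_neg, zpow_neg, zpow_sub₀ q_ne]
  have e : ∀ x : RatFunc ℚ, x ≠ 0 → 1 - x⁻¹ = -(1 - x) / x := by intro x hx; field_simp; ring
  rw [e _ hm, e _ hl]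
  rw [div_div_div_eq, neg_mul, mul_neg, neg_div_neg_eq, mul_comm (q ^ m), div_mul_div_comm, mul_comm (q ^ l), mul_comm (q ^ m)]

lemma ndv {d : ℕ} (m : ℤ) (h0 : 0 < m) (h1 : m < d) : ¬ (d : ℤ) ∣ m := by
  intro h; have := Int.le_of_dvd h0 h; omega

lemma ndv2 {d : ℕ} (h : ℕ) (hd : d = 2 * h + 1) (m : ℤ) (h0 : 0 < m) (h1 : m < d) : ¬ (d : ℤ) ∣ 2 * m := by
  intro hh
  have h2 : IsCoprime (d : ℤ) 2 := ⟨1, -h, by rw [hd]; push_cast; ring⟩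
  exact ndv m h0 h1 (h2.dvd_of_dvd_mul_left hh)

lemma xx_ne (k : ℕ) : xx k ≠ 0 := by
  unfold xx; rw [prod_ne_zero_iff]; intro j _
  exact div_ne_zero (one_sub_qn _ (by omega)) (one_sub_qn _ (by omega))
lemma yy_ne (k : ℕ) : yy k ≠ 0 := by
  unfold yy; rw [prod_ne_zero_iff]; intro j _
  exact div_ne_zero (one_sub_qn _ (by omega)) (one_sub_qn _ (by omega))

lemma rr (m l : ℤ) (hm : m ≠ 0) (hl : l ≠ 0) (x : RatFunc ℚ) :
    x * ((1 - q ^ m) / (1 - q ^ l)) * ((1 - q ^ l) / (1 - q ^ m)) = x := by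
  have := one_sub_qz m hm
  have := one_sub_qz l hl
  field_simp

section
variable {d : ℕ} [NeZero d]

lemma ratio_mem (m l : ℤ) (hl : ¬ (d : ℤ) ∣ l) : (1 - q ^ m) / (1 - q ^ l) ∈ Od d :=
  (ev_ratio m m l l (by simp) (by simp) hl).1

lemma xx_mem_small (h : ℕ) (hd : d = 2 * h + 1) (k : ℕ) (hk : k < d) : xx k ∈ Od d := by
  induction k with
  | zero => simp [xx]
  | succ k ih => rw [xx_succ]; exact mul_mem (ih (by omega)) (ratio_mem _ _ (dv2 h hd k hk))
lemma yy_mem_small (h : ℕ) (hd : d = 2 * h + 1) (k : ℕ) (hk : k < d) : yy k ∈ Od d := by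
  induction k with
  | zero => simp [yy]
  | succ k ih => rw [yy_succ]; exact mul_mem (ih (by omega)) (ratio_mem _ _ (dv4 h hd k hk))

lemma xx_refl (h : ℕ) (hd : d = 2 * h + 1) (k : ℕ) (hk : k ≤ h) :
    ev d (xx (h - k)) (q ^ k * (xx h * xx k)) := by
  induction k with
  | zero => simpa [xx] using ev.refl (xx_mem_small h hd h (by omega))
  | succ k ih =>
    obtain ⟨j, hj⟩ : ∃ j, h = j + k + 1 := ⟨h - (k + 1), by omega⟩
    have ih := ih (by omega)
    rw [show h - k = j + 1 by omega, xx_succ] at ih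
    rw [show h - (k + 1) = j by omega]
    have hR := ev_ratio (d := d) (2 * j + 2) (-(2 * k + 1)) (2 * j + 1) (-(2 * k + 2))
      ⟨1, by rw [hd, hj]; push_cast; ring⟩ ⟨1, by rw [hd, hj]; push_cast; ring⟩ (ndv _ (by omega) (by omega))
    have := ih.mul hR
    rw [rr _ _ (by omega) (by omega), ratio_flip] at this
    rw [xx_succ k]
    convert this using 1
    rw [show (2 * (k : ℤ) + 2 - (2 * k + 1)) = 1 by ring, zpow_one]; ring

lemma yy_refl (h : ℕ) (hd : d = 2 * h + 1) (k : ℕ) (hk : k ≤ h) :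
    ev d (yy (h - k)) (q ^ (2 * k) * (yy h * yy k)) := by
  induction k with
  | zero => simpa [yy] using ev.refl (yy_mem_small h hd h (by omega))
  | succ k ih =>
    obtain ⟨j, hj⟩ : ∃ j, h = j + k + 1 := ⟨h - (k + 1), by omega⟩
    have ih := ih (by omega)
    rw [show h - k = j + 1 by omega, yy_succ] at ih
    rw [show h - (k + 1) = j by omega]
    have hR := ev_ratio (d := d) (4 * j + 4) (-(4 * k + 2)) (4 * j + 2) (-(4 * k + 4))
      ⟨2, by rw [hd, hj]; push_cast; ring⟩ ⟨2, by rw [hd, hj]; push_cast; ring⟩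
      (by have := ndv2 h hd (2 * j + 1) (by omega) (by omega)
          rwa [show (2 * (2 * (j : ℤ) + 1)) = 4 * j + 2 by ring] at this)
    have := ih.mul hR
    rw [rr _ _ (by omega) (by omega), ratio_flip] at this
    rw [yy_succ k]
    convert this using 1
    rw [show (4 * (k : ℤ) + 4 - (4 * k + 2)) = ((2 : ℕ) : ℤ) by norm_num, zpow_natCast]; ring

lemma xx_h (h : ℕ) (hd : d = 2 * h + 1) : ev d (xx h) ((-1) ^ h * q ^ (-(h * (h + 1)) : ℤ)) := by
  have e1 : xx h = ∏ j ∈ range h, ((1 - q ^ (2 * ((h - 1 - j : ℕ) : ℤ) + 1)) / (1 - q ^ (2 * (j : ℤ) + 2))) := by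
    unfold xx
    rw [prod_div_distrib, prod_div_distrib, ← Finset.prod_range_reflect]
    congr 1
  have e2 : ∀ h : ℕ, ∏ j ∈ range h, ((1 - q ^ (-(2 * (j : ℤ) + 2))) / (1 - q ^ (2 * (j : ℤ) + 2))) = (-1) ^ h * q ^ (-(h * (h + 1)) : ℤ) := by
    intro h
    induction h with
    | zero => simp
    | succ h ih =>
      rw [prod_range_succ, ih]
      have e : 1 - q ^ (-(2 * (h : ℤ) + 2)) = - q ^ (-(2 * (h : ℤ) + 2)) * (1 - q ^ (2 * (h : ℤ) + 2)) := by
        rw [zpow_neg]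
        have : q ^ (2 * (h : ℤ) + 2) ≠ 0 := zpow_ne_zero _ q_ne
        field_simp; ring
      rw [e, mul_div_assoc, div_self (one_sub_qz _ (by omega))]
      rw [show (-(((h + 1 : ℕ) : ℤ) * (((h + 1 : ℕ) : ℤ) + 1))) = -((h : ℤ) * (h + 1)) + (-(2 * h + 2)) by push_cast; ring, zpow_add₀ q_ne]
      ring
  rw [e1, ← e2]
  apply ev.prod
  intro j hj
  simp at hj
  apply ev_ratio
  · exact ⟨1, by rw [hd]; push_cast [show 1 ≤ h by omega, show j ≤ h - 1 by omega]; ring⟩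
  · simp
  · exact dv2 h hd j (by omega)

lemma yy_h (h : ℕ) (hd : d = 2 * h + 1) : ev d (yy h) ((-1) ^ h * q ^ (-(2 * (h * (h + 1))) : ℤ)) := by
  have e1 : yy h = ∏ j ∈ range h, ((1 - q ^ (4 * ((h - 1 - j : ℕ) : ℤ) + 2)) / (1 - q ^ (4 * (j : ℤ) + 4))) := by
    unfold yy
    rw [prod_div_distrib, prod_div_distrib, ← Finset.prod_range_reflect]
    congr 1
  have e2 : ∀ h : ℕ, ∏ j ∈ range h, ((1 - q ^ (-(4 * (j : ℤ) + 4))) / (1 - q ^ (4 * (j : ℤ) + 4))) = (-1) ^ h * q ^ (-(2 * (h * (h + 1))) : ℤ) := by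
    intro h
    induction h with
    | zero => simp
    | succ h ih =>
      rw [prod_range_succ, ih]
      have e : 1 - q ^ (-(4 * (h : ℤ) + 4)) = - q ^ (-(4 * (h : ℤ) + 4)) * (1 - q ^ (4 * (h : ℤ) + 4)) := by
        rw [zpow_neg]
        have : q ^ (4 * (h : ℤ) + 4) ≠ 0 := zpow_ne_zero _ q_ne
        field_simp; ring
      rw [e, mul_div_assoc, div_self (one_sub_qz _ (by omega))]
      rw [show (-(2 * (((h + 1 : ℕ) : ℤ) * (((h + 1 : ℕ) : ℤ) + 1)))) = -(2 * ((h : ℤ) * (h + 1))) + (-(4 * h + 4)) by push_cast; ring, zpow_add₀ q_ne]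
      ring
  rw [e1, ← e2]
  apply ev.prod
  intro j hj
  simp at hj
  apply ev_ratio
  · exact ⟨2, by rw [hd]; push_cast [show 1 ≤ h by omega, show j ≤ h - 1 by omega]; ring⟩
  · simp
  · exact dv4 h hd j (by omega)

lemma qint_mem (hd : 1 < d) (m : ℤ) : qint m ∈ Od d := by
  have := ratio_mem (d := d) m 1 (ndv _ (by omega) (by omega))
  simpa [qint] using this

lemma ev_qint (hd : 1 < d) (m m' : ℤ) (h : (d : ℤ) ∣ m - m') : ev d (qint m) (qint m') := by
  have := ev_ratio (d := d) m m' 1 1 h (by simp) (ndv _ (by omega) (by omega))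
  simpa [qint] using this

lemma cc_refl (hd1 : 1 < d) (h : ℕ) (hd : d = 2 * h + 1) (k : ℕ) (hk : k ≤ h) :
    ev d (cc (h - k)) (- cc k) := by
  unfold cc CC
  have h1 : ev d ((-1 : RatFunc ℚ) ^ (h - k)) ((-1) ^ h * (-1) ^ k) := by
    obtain ⟨j, rfl⟩ : ∃ j, h = j + k := ⟨h - k, by omega⟩
    have : (-1 : RatFunc ℚ) ^ (j + k) * (-1) ^ k = (-1) ^ j := by
      rw [pow_add, mul_assoc, ← mul_pow]; simp
    rw [this, Nat.add_sub_cancel]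
    exact ev.refl (pow_mem (neg_mem (one_mem _)) _)
  have h2 : ev d (qint (4 * ((h - k : ℕ) : ℤ) + 1)) (qint (-(4 * k + 1))) :=
    ev_qint hd1 _ _ ⟨2, by rw [hd]; push_cast [hk]; ring⟩
  have h2' : qint (-(4 * k + 1)) = - q ^ (-(4 * (k : ℤ) + 1)) * qint (4 * k + 1) := by
    unfold qint
    rw [zpow_neg]
    have : q ^ (4 * (k : ℤ) + 1) ≠ 0 := zpow_ne_zero _ q_ne
    have := one_sub_q
    field_simp; ring
  have h3 := (yy_refl h hd k hk).trans (((ev.refl (pow_mem (q_mem d) (2 * k))).mul ((yy_h h hd).mul (ev.refl (yy_mem_small h hd k (by omega))))))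
  have h4 : ev d (q ^ (h - k)) (q ^ ((h : ℤ) - k)) := by
    rw [← zpow_natCast]; apply ev_q; push_cast [hk]; simp
  have h5 := ((xx_refl h hd k hk).trans (((ev.refl (pow_mem (q_mem d) k)).mul ((xx_h h hd).mul (ev.refl (xx_mem_small h hd k (by omega))))))).pow 4
  have h6 := (((h1.mul h2).mul h3).mul h4).mul h5
  refine h6.trans ?_
  have hs : ((-1 : RatFunc ℚ) ^ h) ^ 2 = 1 := by rw [← pow_mul, mul_comm, pow_mul]; simp
  have hs4 : ((-1 : RatFunc ℚ) ^ h) ^ 4 = 1 := by rw [← pow_mul, mul_comm, pow_mul]; norm_num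
  have hz : q ^ (-(4 * (k : ℤ) + 1)) * q ^ (2 * k) * q ^ (-(2 * (h * (h + 1))) : ℤ) * q ^ ((h : ℤ) - k) * (q ^ k) ^ 4 *
      (q ^ (-(h * (h + 1)) : ℤ)) ^ 4 = q ^ ((k : ℤ) - 3 * d * h - d) := by
    have e1 : (q ^ k) ^ 4 = q ^ (4 * k : ℤ) := by rw [← pow_mul, ← zpow_natCast]; push_cast; ring_nf
    have e2 : q ^ (2 * k) = q ^ (2 * k : ℤ) := by rw [← zpow_natCast]; push_cast; rfl
    have e3 : (q ^ (-(h * (h + 1)) : ℤ)) ^ 4 = q ^ (-(h * (h + 1)) * 4 : ℤ) := by rw [zpow_mul]; rfl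
    rw [e1, e2, e3]
    simp only [← zpow_add₀ q_ne]
    congr 1
    rw [hd]; push_cast; ring
  have hz2 : ev d (q ^ ((k : ℤ) - 3 * d * h - d)) (q ^ k) := by
    rw [← zpow_natCast]; exact ev_q _ _ ⟨-3 * h - 1, by ring⟩
  have h7 := hz2.mul (ev.refl (f := -((-1) ^ k * qint (4 * k + 1) * yy k * xx k ^ 4))
    (neg_mem (mul_mem (mul_mem (mul_mem (pow_mem (neg_mem (one_mem _)) _) (qint_mem hd1 _)) (yy_mem_small h hd k (by omega))) (pow_mem (xx_mem_small h hd k (by omega)) _))))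
  rw [h2']
  convert h7 using 1
  · rw [← hz, mul_pow, mul_pow, mul_pow, hs4]
    linear_combination (-1) * ((-1) ^ k * qint (4 * k + 1) * yy k * xx k ^ 4) * (q ^ (-(4 * (k : ℤ) + 1)) * q ^ (2 * k) * q ^ (-(2 * (h * (h + 1))) : ℤ) * q ^ ((h : ℤ) - k) * (q ^ k) ^ 4 *
      (q ^ (-(h * (h + 1)) : ℤ)) ^ 4) * hs
  · ring

/-- L -/
noncomputable def LL (k : ℕ) : RatFunc ℚ := ∑ j ∈ range k, (ww (2 * j + 1) - ww (2 * j + 2))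
lemma LL_succ (k : ℕ) : LL (k + 1) = LL k + (ww (2 * k + 1) - ww (2 * k + 2)) := by
  unfold LL; rw [sum_range_succ]

lemma LL_mem (h : ℕ) (hd : d = 2 * h + 1) (k : ℕ) (hk : k ≤ h) : LL k ∈ Od d := by
  unfold LL
  apply sum_mem; intro j hj; simp at hj
  exact sub_mem (ww_mem _ (ndv _ (by omega) (by omega))) (ww_mem _ (ndv _ (by omega) (by omega)))

lemma LL_h (h : ℕ) (hd : d = 2 * h + 1) : ev d (LL h) 0 := by
  have e : LL h = ∑ j ∈ range h, (ww (2 * ((h - 1 - j : ℕ) : ℤ) + 1) - ww (2 * j + 2)) := by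
    unfold LL
    rw [sum_sub_distrib, sum_sub_distrib, ← Finset.sum_range_reflect]
  rw [e, show (0 : RatFunc ℚ) = ∑ j ∈ range h, (ww (-(2 * j + 2)) - ww (2 * j + 2)) by
    rw [eq_comm]; apply sum_eq_zero; intro j _; rw [ww_neg]; ring]
  apply ev.sum
  intro j hj; simp at hj
  refine (ev_ww _ _ ⟨1, ?_⟩ (ndv _ (by omega) (by omega))).sub (ev.refl (ww_mem _ (ndv _ (by omega) (by omega))))
  rw [hd]; push_cast [show 1 ≤ h by omega, show j ≤ h - 1 by omega]; ring

lemma LL_refl (h : ℕ) (hd : d = 2 * h + 1) (k : ℕ) (hk : k ≤ h) : ev d (LL (h - k)) (LL k) := by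
  induction k with
  | zero => have := LL_h h hd; simpa [LL] using this
  | succ k ih =>
    obtain ⟨j, hj⟩ : ∃ j, h = j + k + 1 := ⟨h - (k + 1), by omega⟩
    have ih := ih (by omega)
    rw [show h - k = j + 1 by omega, LL_succ] at ih
    rw [show h - (k + 1) = j by omega]
    have h1 := ev_ww (d := d) (2 * j + 1) (-(2 * k + 2)) ⟨1, by rw [hd, hj]; push_cast; ring⟩ (ndv _ (by omega) (by omega))
    have h2 := ev_ww (d := d) (2 * j + 2) (-(2 * k + 1)) ⟨1, by rw [hd, hj]; push_cast; ring⟩ (ndv _ (by omega) (by omega))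
    rw [ww_neg] at h1 h2
    have := ih.sub (h1.sub h2)
    convert this using 1
    · ring
    · rw [LL_succ]; ring

lemma sum_cc_half (hd1 : 1 < d) (h : ℕ) (hd : d = 2 * h + 1) : cg d 1 (∑ k ∈ range (h + 1), cc k) :=
  antisym h cc (fun k hk => cc_refl hd1 h hd k hk)

lemma sum_ccL_half (hd1 : 1 < d) (h : ℕ) (hd : d = 2 * h + 1) : cg d 1 (∑ k ∈ range (h + 1), cc k * LL k ^ 2) := by
  apply antisym
  intro k hk
  have := (cc_refl hd1 h hd k hk).mul ((LL_refl h hd k hk).pow 2)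
  rwa [neg_mul] at this
end

lemma ratio_one (b a e D : RatFunc ℚ) (hb : 1 - D * b ≠ 0) (he : e = (1 - D * b)⁻¹) :
    (1 - D * a) / (1 - D * b) = 1 - D * (a - b) + D ^ 2 * ((b ^ 2 - a * b) * e) := by
  subst he; field_simp; ring

lemma expand {d : ℕ} [NeZero d] (f D : RatFunc ℚ) (hf : f ∈ Od d) (hD : D = (1 - q ^ d) * f)
    (a b : ℕ → RatFunc ℚ) (k : ℕ) (ha : ∀ i, i < k → a i ∈ Od d) (hb : ∀ i, i < k → b i ∈ Od d)
    (hb0 : ∀ i, i < k → 1 - D * b i ≠ 0) :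
    ∃ e ∈ Od d, ∏ i ∈ range k, ((1 - D * a i) / (1 - D * b i)) =
      1 - D * (∑ i ∈ range k, (a i - b i)) + D ^ 2 * e := by
  have hDm : D ∈ Od d := by rw [hD]; exact mul_mem pi_mem hf
  induction k with
  | zero => exact ⟨0, zero_mem _, by simp⟩
  | succ k ih =>
    obtain ⟨e, he, h⟩ := ih (fun i hi => ha i (by omega)) (fun i hi => hb i (by omega)) (fun i hi => hb0 i (by omega))
    have hA := ha k (by omega)
    have hB := hb k (by omega)
    have hi : (1 - D * b k)⁻¹ ∈ Od d := by
      rw [hD, mul_assoc]; exact one_sub_pi_inv d _ (mul_mem hf hB)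
    have hs : ∑ i ∈ range k, (a i - b i) ∈ Od d := sum_mem fun i hi => by
      simp at hi; exact sub_mem (ha i (by omega)) (hb i (by omega))
    rw [prod_range_succ, h, sum_range_succ, ratio_one (b k) (a k) _ D (hb0 k (by omega)) rfl]
    set s := ∑ i ∈ range k, (a i - b i)
    set r := (b k ^ 2 - a k * b k) * (1 - D * b k)⁻¹ with hr
    have hrm : r ∈ Od d := mul_mem (sub_mem (pow_mem hB 2) (mul_mem hA hB)) hi
    refine ⟨e + r + s * (a k - b k) - D * s * r - D * e * (a k - b k) + D ^ 2 * e * r, ?_, by ring⟩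
    have hab := sub_mem hA hB
    exact add_mem (sub_mem (sub_mem (add_mem (add_mem he hrm) (mul_mem hs hab)) (mul_mem (mul_mem hDm hs) hrm))
      (mul_mem (mul_mem hDm he) hab)) (mul_mem (mul_mem (pow_mem hDm 2) he) hrm)

/-- delta -/
noncomputable def dl (N : ℕ) : RatFunc ℚ := (1 - q ^ (2 * N + 1)) ^ 2 / q ^ (2 * N + 1)

lemma uu_dl (N : ℕ) (m : ℤ) (hm : m ≠ 0) :
    1 - uu N * q ^ m + (q ^ m) ^ 2 = (1 - q ^ m) ^ 2 * (1 - dl N * ww m) := by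
  have h1 := one_sub_qz m hm
  have h2 := qk_ne (2 * N + 1)
  unfold uu dl ww
  field_simp; ring

lemma uu_fac_ne (N : ℕ) (m : ℤ) (h1 : m ≠ 2 * N + 1) (h2 : m ≠ -(2 * N + 1)) :
    1 - uu N * q ^ m + (q ^ m) ^ 2 ≠ 0 := by
  rw [uu_fac, ← zpow_natCast, ← zpow_add₀ q_ne, ← zpow_sub₀ q_ne]
  exact mul_ne_zero (one_sub_qz _ (by push_cast; omega)) (one_sub_qz _ (by push_cast; omega))

lemma dl_ne (N : ℕ) (m : ℤ) (h0 : m ≠ 0) (h1 : m ≠ 2 * N + 1) (h2 : m ≠ -(2 * N + 1)) :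
    1 - dl N * ww m ≠ 0 := by
  have := uu_fac_ne N m h1 h2
  rw [uu_dl N m h0] at this
  exact right_ne_zero_of_mul this

lemma qpc (j : ℕ) : q ^ (4 * j + 4) = (q ^ (2 * (j : ℤ) + 2)) ^ 2 := by
  have : q ^ (2 * (j : ℤ) + 2) = q ^ (2 * j + 2) := by rw [← zpow_natCast]; push_cast; rfl
  rw [this]; ring
lemma qpc2 (j : ℕ) : q ^ (2 * j + 2) = q ^ (2 * (j : ℤ) + 2) := by rw [← zpow_natCast]; push_cast; rfl
lemma qpc1 (j : ℕ) : q ^ (2 * j + 1) = q ^ (2 * (j : ℤ) + 1) := by rw [← zpow_natCast]; push_cast; rfl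
lemma qpc' (j : ℕ) : q ^ (4 * j + 2) = (q ^ (2 * (j : ℤ) + 1)) ^ 2 := by
  rw [← qpc1]; ring

lemma gg_uu (N k : ℕ) : gg (uu N) k = xx k ^ 2 *
    ∏ i ∈ range k, ((1 - dl N * ww (2 * i + 1)) / (1 - dl N * ww (2 * i + 2))) := by
  unfold gg xx
  rw [← prod_pow, ← prod_mul_distrib]
  apply prod_congr rfl
  intro j _
  rw [qpc, qpc', qpc1, qpc2, uu_dl _ _ (by omega), uu_dl _ _ (by omega), div_pow, div_mul_div_comm]

lemma dl_eq (N : ℕ) : dl N = (1 - q ^ (2 * N + 1)) * ((1 - q ^ (2 * N + 1)) * q ^ (-(2 * N + 1) : ℤ)) := by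
  unfold dl
  rw [zpow_neg, show (2 * (N : ℤ) + 1) = ((2 * N + 1 : ℕ) : ℤ) by push_cast; rfl, zpow_natCast]
  ring

lemma dl_mem (N : ℕ) [NeZero (2 * N + 1)] : (1 - q ^ (2 * N + 1)) * q ^ (-(2 * N + 1) : ℤ) ∈ Od (2 * N + 1) :=
  mul_mem pi_mem (qz_mem _ _)

lemma dl_cg (N : ℕ) [NeZero (2 * N + 1)] : cg (2 * N + 1) 2 (dl N) :=
  ⟨q ^ (-(2 * N + 1) : ℤ), qz_mem _ _, by rw [dl_eq]; ring⟩

lemma cc_mem_small {d : ℕ} [NeZero d] (hd1 : 1 < d) (h : ℕ) (hd : d = 2 * h + 1) (k : ℕ) (hk : k < d) : cc k ∈ Od d := by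
  unfold cc CC
  exact mul_mem (mul_mem (mul_mem (mul_mem (pow_mem (neg_mem (one_mem _)) _) (qint_mem hd1 _))
    (yy_mem_small h hd k hk)) (pow_mem (q_mem d) _)) (pow_mem (xx_mem_small h hd k hk) _)

lemma sumA (N : ℕ) (hN : 0 < N) [NeZero (2 * N + 1)] :
    cg (2 * N + 1) 5 (∑ k ∈ range (N + 1), cc k - 2 * FF N 2 + FF N (uu N)) := by
  have s1 := spec N 2 (fun j _ => by
    rw [show 1 - 2 * q ^ (2 * j + 2) + q ^ (4 * j + 4) = (1 - q ^ (2 * j + 2)) ^ 2 by ring]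
    exact pow_ne_zero _ (one_sub_qn _ (by omega)))
  have s2 := spec N (uu N) (fun j hj => by
    rw [qpc, qpc2]; exact uu_fac_ne _ _ (by omega) (by omega))
  have e : ∑ k ∈ range (N + 1), cc k - 2 * FF N 2 + FF N (uu N) =
      ∑ k ∈ range (N + 1), CC k * (gg 2 k - gg (uu N) k) ^ 2 := by
    rw [← s1, ← s2, mul_sum, ← sum_sub_distrib, ← sum_add_distrib]
    apply sum_congr rfl; intro k _
    unfold cc; rw [gg_two]; ring
  rw [e]
  have key : ∀ k ∈ range (N + 1), ∃ e ∈ Od (2 * N + 1), CC k * (gg 2 k - gg (uu N) k) ^ 2 =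
      dl N ^ 2 * (cc k * LL k ^ 2) + dl N ^ 3 * e := by
    intro k hk
    simp at hk
    obtain ⟨e, he, h⟩ := expand (d := 2 * N + 1) _ (dl N) (dl_mem N) (dl_eq N)
      (fun i => ww (2 * i + 1)) (fun i => ww (2 * i + 2)) k
      (fun i hi => ww_mem _ (ndv _ (by omega) (by push_cast; omega)))
      (fun i hi => ww_mem _ (ndv _ (by omega) (by push_cast; omega)))
      (fun i hi => dl_ne N _ (by omega) (by omega) (by omega))
    have hL := LL_mem (d := 2 * N + 1) N rfl k (by omega)
    have hc := cc_mem_small (d := 2 * N + 1) (by omega) N rfl k (by omega)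
    refine ⟨cc k * (-2 * LL k * e + dl N * e ^ 2), ?_, ?_⟩
    · refine mul_mem hc (add_mem (mul_mem (mul_mem (neg_mem ?_) hL) he) (mul_mem (dl_cg N).mem (pow_mem he 2)))
      exact_mod_cast natCast_mem (Od (2 * N + 1)) 2
    · rw [gg_two, gg_uu, h]
      change _ * (_ - _ * (1 - _ * LL k + _)) ^ 2 = _
      unfold cc; ring
  choose! e he hh using key
  rw [sum_congr rfl hh, sum_add_distrib, ← mul_sum, ← mul_sum]
  have h2 := ((dl_cg N).mul (dl_cg N)).mul (sum_ccL_half (d := 2 * N + 1) (by omega) N rfl)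
  have h3 := ((dl_cg N).mul ((dl_cg N).mul (dl_cg N))).mulO (sum_mem he)
  convert h2.add (h3.le (m' := 5) (by norm_num)) using 1
  ring

lemma sumw (K : ℕ) : ∑ i ∈ range (2 * K), ww (2 - 4 * (K : ℤ) + 4 * i) =
    ∑ i ∈ range (2 * K), ww (2 * i + 2) + ∑ i ∈ range (2 * K), (-1) ^ i * ww (2 * i + 2) := by
  induction K with
  | zero => simp
  | succ K ih =>
    rw [show 2 * (K + 1) = 2 * K + 1 + 1 by ring, sum_range_succ', sum_range_succ, sum_range_succ,
      sum_range_succ, sum_range_succ, sum_range_succ]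
    have e : ∀ i : ℕ, (2 - 4 * ((K + 1 : ℕ) : ℤ) + 4 * ((i + 1 : ℕ) : ℤ)) = 2 - 4 * K + 4 * i := by
      intro i; push_cast; ring
    simp only [e]
    rw [ih]
    have e2 : (2 - 4 * (K : ℤ) + 4 * ((2 * K : ℕ) : ℤ)) = 2 * ((2 * K : ℕ) : ℤ) + 2 := by push_cast; ring
    have e3 : (2 - 4 * ((K + 1 : ℕ) : ℤ) + 4 * ((0 : ℕ) : ℤ)) = -(2 * ((2 * K : ℕ) : ℤ) + 2) := by push_cast; ring
    rw [e2, e3, ww_neg]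
    have e4 : (-1 : RatFunc ℚ) ^ (2 * K) = 1 := by rw [pow_mul]; simp
    rw [pow_succ, e4]
    ring

lemma FF_uu_two (K : ℕ) : FF (2 * K) (uu (2 * K)) = FF (2 * K) 2 *
    ∏ i ∈ range (2 * K), ((1 - dl (2 * K) * ww (2 - 4 * (K : ℤ) + 4 * i)) / (1 - dl (2 * K) * ww (2 * i + 2))) := by
  unfold FF
  rw [← prod_div_distrib, ← prod_div_distrib, mul_assoc _ (∏ i ∈ range (2 * K), _), ← prod_mul_distrib]
  congr 1
  apply prod_congr rfl
  intro i _
  rw [qpc, qpc2, uu_dl _ _ (by omega), uu_dl _ _ (by push_cast; omega)]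
  rw [show (2 - 2 * ((2 * K : ℕ) : ℤ) + 4 * i) = (2 - 4 * (K : ℤ) + 4 * i) by push_cast; ring]
  rw [← div_mul_div_comm]
  congr 2 <;> ring

lemma rhs1 (N : ℕ) : qint (2 * (N : ℤ) + 1) ^ 2 * ∑ j ∈ Icc 1 N, (-1 : RatFunc ℚ) ^ (j + 1) * q ^ (2 * (j : ℤ) - (2 * N + 1)) / qint (2 * j) ^ 2
    = dl N * ∑ i ∈ range N, (-1) ^ i * ww (2 * i + 2) := by
  have : Icc 1 N = Ico (0 + 1) (N + 1) := by ext; simp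
  rw [this, ← Finset.sum_Ico_add' _ 0 N 1, ← range_eq_Ico, mul_sum, mul_sum]
  apply sum_congr rfl
  intro i _
  rw [show (2 * ((i + 1 : ℕ) : ℤ)) = 2 * i + 2 by push_cast; ring, qint_2N, zpow_sub₀ q_ne]
  rw [show (2 * (N : ℤ) + 1) = ((2 * N + 1 : ℕ) : ℤ) by push_cast; rfl, zpow_natCast]
  unfold dl ww qint
  have h1 := one_sub_q
  have h2 := one_sub_qz (2 * i + 2) (by omega)
  have h3 := qk_ne (2 * N + 1)
  rw [show (-1 : RatFunc ℚ) ^ (i + 1 + 1) = (-1) ^ i by ring]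
  field_simp

lemma case1 (K : ℕ) (hK : 0 < K) [NeZero (2 * (2 * K) + 1)] :
    cg (2 * (2 * K) + 1) 5 (∑ k ∈ range (2 * K + 1), cc k - qint (2 * ((2 * K : ℕ) : ℤ) + 1) * yy K ^ 2 *
      (1 + dl (2 * K) * ∑ i ∈ range (2 * K), (-1) ^ i * ww (2 * i + 2))) := by
  have hA := sumA (2 * K) (by omega)
  obtain ⟨e, he, h⟩ := expand (d := 2 * (2 * K) + 1) _ (dl (2 * K)) (dl_mem (2 * K)) (dl_eq (2 * K))
      (fun i => ww (2 - 4 * (K : ℤ) + 4 * i)) (fun i => ww (2 * i + 2)) (2 * K)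
      (fun i hi => ww_mem _ (by
        intro hh
        have := Int.eq_zero_of_abs_lt_dvd hh (by rw [abs_lt]; push_cast; omega)
        omega))
      (fun i hi => ww_mem _ (ndv _ (by omega) (by push_cast; omega)))
      (fun i hi => dl_ne _ _ (by omega) (by push_cast; omega) (by push_cast; omega))
  rw [FF_uu_two, h, sum_sub_distrib, sumw, FF_two] at hA
  have hy := yy_mem_small (d := 2 * (2 * K) + 1) (2 * K) rfl K (by omega)
  have hq : cg (2 * (2 * K) + 1) 1 (qint (2 * ((2 * K : ℕ) : ℤ) + 1)) := by
    rw [qint_2N, div_eq_mul_inv]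
    refine cg_pi.mulO ?_
    have := one_sub_inv_mem (2 * (2 * K) + 1) 1 (ndv _ (by omega) (by push_cast; omega))
    simpa using this
  have h3 := (hq.mul ((dl_cg (2 * K)).mul (dl_cg (2 * K)))).mulO (mul_mem (pow_mem hy 2) he)
  convert hA.sub h3 using 1
  ring

lemma case3 (K : ℕ) [NeZero (2 * (2 * K + 1) + 1)] :
    cg (2 * (2 * K + 1) + 1) 5 (∑ k ∈ range (2 * K + 1 + 1), cc k - qint (2 * ((2 * K + 1 : ℕ) : ℤ) + 1) ^ 2 / q ^ (2 * K + 1) *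
    ((∏ j ∈ range (2 * K + 1), (1 - q ^ (4 * j + 3))) / ∏ j ∈ range (2 * K + 1), (1 - q ^ (4 * j + 5)))) := by
  have hA := sumA (2 * K + 1) (by omega)
  rw [FF_two_odd, FF_uu] at hA
  convert hA using 1
  rw [pow_succ (-1 : RatFunc ℚ), pow_mul]; simp; ring

section
variable {d : ℕ} [NeZero d]
lemma xx_cg (h : ℕ) (hd : d = 2 * h + 1) (k : ℕ) (hk : h < k) (hkd : k < d) : cg d 1 (xx k) := by
  induction k, hk using Nat.le_induction with
  | base =>
    rw [xx_succ, div_eq_mul_inv]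
    have : cg d 1 (1 - q ^ (2 * (h : ℤ) + 1)) := by rw [← qpc1, ← hd]; exact cg_pi
    exact (this.mulO (one_sub_inv_mem d _ (dv2 h hd h hkd))).Omul (xx_mem_small h hd h (by omega))
  | succ k hk ih =>
    rw [xx_succ]
    exact (ih (by omega)).mulO (ratio_mem _ _ (dv2 h hd k hkd))
lemma yy_cg (h : ℕ) (hd : d = 2 * h + 1) (k : ℕ) (hk : h < k) (hkd : k < d) : cg d 1 (yy k) := by
  induction k, hk using Nat.le_induction with
  | base =>
    rw [yy_succ, div_eq_mul_inv]
    have : cg d 1 (1 - q ^ (4 * (h : ℤ) + 2)) := by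
      have := cg_dvd (d := d) (4 * h + 2) ⟨2, by rw [hd]; ring⟩
      rw [← zpow_natCast] at this; push_cast at this; exact this
    exact (this.mulO (one_sub_inv_mem d _ (dv4 h hd h hkd))).Omul (yy_mem_small h hd h (by omega))
  | succ k hk ih =>
    rw [yy_succ]
    exact (ih (by omega)).mulO (ratio_mem _ _ (dv4 h hd k hkd))
lemma cc_cg (hd1 : 1 < d) (h : ℕ) (hd : d = 2 * h + 1) (k : ℕ) (hk : h < k) (hkd : k < d) : cg d 5 (cc k) := by
  have hx := xx_cg h hd k hk hkd
  have h1 := (yy_cg h hd k hk hkd).mul (hx.mul (hx.mul (hx.mul hx)))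
  have h2 : (-1) ^ k * qint (4 * k + 1) * q ^ k ∈ Od d := mul_mem (mul_mem (pow_mem (neg_mem (one_mem _)) _) (qint_mem hd1 _)) (pow_mem (q_mem d) _)
  convert h1.Omul h2 using 1
  unfold cc CC; ring
lemma sum_cc_tail (hd1 : 1 < d) (h : ℕ) (hd : d = 2 * h + 1) :
    cg d 5 (∑ k ∈ range d, cc k - ∑ k ∈ range (h + 1), cc k) := by
  rw [← sum_Ico_eq_sub _ (by omega : h + 1 ≤ d)]
  apply cg.sum
  intro k hk; simp at hk
  exact cc_cg hd1 h hd k (by omega) hk.2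
lemma sum_cc_full (hd1 : 1 < d) (h : ℕ) (hd : d = 2 * h + 1) : cg d 1 (∑ k ∈ range d, cc k) := by
  have := ((sum_cc_tail hd1 h hd).le (m' := 1) (by norm_num)).add (sum_cc_half hd1 h hd)
  simpa using this
end

section
variable {d : ℕ} [NeZero d]

lemma ratio_mem_dvd (n m : ℕ) (hn : d ∣ n) (hm : 0 < m) : (1 - q ^ n) / (1 - q ^ m) ∈ Od d := by
  by_cases h : d ∣ m
  · obtain ⟨c, rfl⟩ := h
    have h1 := one_sub_mul_inv d c (Nat.pos_of_mul_pos_left hm)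
    obtain ⟨g, hg, e⟩ := cg_dvd n hn
    rw [e, pow_one, mul_comm, mul_div_assoc]
    exact mul_mem hg h1
  · have := ratio_mem (d := d) n m (by rwa [Int.natCast_dvd_natCast])
    simpa using this

lemma qn_mem (m : ℕ) : 1 - q ^ m ∈ Od d := sub_mem (one_mem _) (pow_mem (q_mem d) m)

lemma pairing (a b c h m k : ℕ) (e : a * h + c = b + d * m) (hb : 0 < b) (hc : 0 < c) (hk : h ≤ k) :
    (∏ j ∈ range k, (1 - q ^ (a * j + b))) / (∏ j ∈ range k, (1 - q ^ (a * j + c))) *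
      (∏ j ∈ range h, (1 - q ^ (a * j + c))) ∈ Od d := by
  obtain ⟨r, rfl⟩ : ∃ r, k = h + r := ⟨k - h, by omega⟩
  rw [prod_range_add (fun j => 1 - q ^ (a * j + c))]
  rw [add_comm h r, prod_range_add (fun j => 1 - q ^ (a * j + b))]
  have h0 : (∏ j ∈ range h, (1 - q ^ (a * j + c))) ≠ 0 := by
    rw [prod_ne_zero_iff]; intro j _; exact one_sub_qn _ (by omega)
  have h1 : (∏ j ∈ range r, (1 - q ^ (a * (h + j) + c))) ≠ 0 := by
    rw [prod_ne_zero_iff]; intro j _; exact one_sub_qn _ (by omega)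
  have e2 : ∀ A B C D : RatFunc ℚ, C ≠ 0 → D ≠ 0 → A * B / (C * D) * C = A / D * B := by
    intro A B C D h1 h2; field_simp
  rw [e2 _ _ _ _ h0 h1, ← prod_div_distrib]
  refine mul_mem (prod_mem fun j _ => ?_) (prod_mem fun j _ => qn_mem _)
  rw [show a * (h + j) + c = (a * j + b) + d * m by rw [mul_add]; omega]
  by_cases h : d ∣ a * j + b
  · exact ratio_mem_dvd _ _ h (by omega)
  · have := ratio_mem (d := d) ((a * j + b : ℕ) : ℤ) ((a * j + b + d * m : ℕ) : ℤ) (by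
      rw [Int.natCast_dvd_natCast]; intro h'; exact h (by simpa using (Nat.dvd_add_left (Dvd.intro _ rfl)).1 h'))
    rw [zpow_natCast, zpow_natCast] at this
    exact this

lemma xx_mem (h : ℕ) (hd : d = 2 * h + 1) (k : ℕ) : xx k ∈ Od d := by
  by_cases hk : k < d
  · exact xx_mem_small h hd k hk
  have h1 := pairing (d := d) 2 1 2 h 1 k (by omega) (by omega) (by omega) (by omega)
  have h2 : (∏ j ∈ range h, (1 - q ^ (2 * j + 2)))⁻¹ ∈ Od d := by
    rw [← prod_inv_distrib]
    refine prod_mem fun j hj => ?_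
    simp at hj
    have := one_sub_inv_mem d _ (dv2 h hd j (by omega))
    rwa [← qpc2] at this
  have h0 : (∏ j ∈ range h, (1 - q ^ (2 * j + 2))) ≠ 0 := by
    rw [prod_ne_zero_iff]; intro j _; exact one_sub_qn _ (by omega)
  have := mul_mem h1 h2
  rw [mul_assoc, mul_inv_cancel₀ h0, mul_one, ← prod_div_distrib] at this
  exact this

lemma yy_mem (h : ℕ) (hd : d = 2 * h + 1) (k : ℕ) : yy k ∈ Od d := by
  by_cases hk : k < d
  · exact yy_mem_small h hd k hk
  have h1 := pairing (d := d) 4 2 4 h 2 k (by omega) (by omega) (by omega) (by omega)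
  have h2 : (∏ j ∈ range h, (1 - q ^ (4 * j + 4)))⁻¹ ∈ Od d := by
    rw [← prod_inv_distrib]
    refine prod_mem fun j hj => ?_
    simp at hj
    have := one_sub_inv_mem d _ (dv4 h hd j (by omega))
    rw [show (4 * (j : ℤ) + 4) = ((4 * j + 4 : ℕ) : ℤ) by push_cast; rfl, zpow_natCast] at this
    exact this
  have h0 : (∏ j ∈ range h, (1 - q ^ (4 * j + 4))) ≠ 0 := by
    rw [prod_ne_zero_iff]; intro j _; exact one_sub_qn _ (by omega)
  have := mul_mem h1 h2
  rw [mul_assoc, mul_inv_cancel₀ h0, mul_one, ← prod_div_distrib] at this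
  exact this

lemma P35_mem (h : ℕ) (hd : d = 2 * h + 1) (k : ℕ) (hk : h ≤ k) :
    (1 - q ^ d) * ((∏ j ∈ range k, (1 - q ^ (4 * j + 3))) / ∏ j ∈ range k, (1 - q ^ (4 * j + 5))) ∈ Od d := by
  have h1 := pairing (d := d) 4 3 5 h 2 k (by omega) (by omega) (by omega) hk
  have hu : ∀ j, j < h → 4 * j + 5 ≠ d → (1 - q ^ (4 * j + 5))⁻¹ ∈ Od d := by
    intro j hj hne
    apply one_sub_inv_mem_nat
    rintro ⟨c, hc⟩
    have : c < 2 := by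
      by_contra hcc
      have : d * 2 ≤ d * c := Nat.mul_le_mul_left d (by omega)
      omega
    interval_cases c <;> omega
  have h2 : (1 - q ^ d) * (∏ j ∈ range h, (1 - q ^ (4 * j + 5)))⁻¹ ∈ Od d := by
    rw [← prod_inv_distrib]
    by_cases hx : ∃ j0, j0 < h ∧ 4 * j0 + 5 = d
    · obtain ⟨j0, hj0, hj⟩ := hx
      rw [← mul_prod_erase (range h) _ (by simpa using hj0 : j0 ∈ range h), ← mul_assoc, hj,
        mul_inv_cancel₀ (one_sub_qn d (by omega)), one_mul]
      refine prod_mem fun j hj' => ?_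
      simp at hj'
      exact hu j hj'.2 (by omega)
    · push Not at hx
      refine mul_mem pi_mem (prod_mem fun j hj' => ?_)
      simp at hj'
      exact hu j hj' (hx j hj')
  have h0 : (∏ j ∈ range h, (1 - q ^ (4 * j + 5))) ≠ 0 := by
    rw [prod_ne_zero_iff]; intro j _; exact one_sub_qn _ (by omega)
  have := mul_mem h1 h2
  convert this using 1
  generalize (∏ j ∈ range k, (1 - q ^ (4 * j + 3))) / ∏ j ∈ range k, (1 - q ^ (4 * j + 5)) = R
  field_simp

lemma xx_block (h : ℕ) (hd : d = 2 * h + 1) (l k : ℕ) (hk : k < d) : ev d (xx (l * d + k)) (xx (l * d) * xx k) := by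
  induction k with
  | zero => simpa [xx] using ev.refl (xx_mem h hd (l * d))
  | succ k ih =>
    rw [← add_assoc, xx_succ, xx_succ k, ← mul_assoc]
    refine (ih (by omega)).mul (ev.symm ?_)
    exact ev_ratio _ _ _ _ ⟨-2 * l, by push_cast; ring⟩ ⟨-2 * l, by push_cast; ring⟩ (dv2 h hd k hk)
lemma yy_block (h : ℕ) (hd : d = 2 * h + 1) (l k : ℕ) (hk : k < d) : ev d (yy (l * d + k)) (yy (l * d) * yy k) := by
  induction k with
  | zero => simpa [yy] using ev.refl (yy_mem h hd (l * d))
  | succ k ih =>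
    rw [← add_assoc, yy_succ, yy_succ k, ← mul_assoc]
    refine (ih (by omega)).mul (ev.symm ?_)
    exact ev_ratio _ _ _ _ ⟨-4 * l, by push_cast; ring⟩ ⟨-4 * l, by push_cast; ring⟩ (dv4 h hd k hk)

lemma cc_block (hd1 : 1 < d) (h : ℕ) (hd : d = 2 * h + 1) (l : ℕ) : ∃ z ∈ Od d, ∀ k, k < d →
    ev d (cc (l * d + k)) (z * cc k) := by
  have hm1 : ∀ m : ℕ, (-1 : RatFunc ℚ) ^ m ∈ Od d := fun m => pow_mem (neg_mem (one_mem _)) m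
  refine ⟨(-1) ^ (l * d) * yy (l * d) * q ^ (l * d) * xx (l * d) ^ 4, ?_, fun k hk => ?_⟩
  · exact mul_mem (mul_mem (mul_mem (hm1 _) (yy_mem h hd _)) (pow_mem (q_mem d) _)) (pow_mem (xx_mem h hd _) 4)
  · have h1 := ev_qint hd1 (4 * ((l * d + k : ℕ) : ℤ) + 1) (4 * k + 1) ⟨4 * l, by push_cast; ring⟩
    have h2 := (((((ev.refl (hm1 (l * d + k))).mul h1).mul (yy_block h hd l k hk)).mul
      (ev.refl (pow_mem (q_mem d) (l * d + k))))).mul ((xx_block h hd l k hk).pow 4)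
    unfold cc CC
    convert h2 using 1
    rw [pow_add, pow_add]; ring

lemma block_part (hd1 : 1 < d) (h : ℕ) (hd : d = 2 * h + 1) (l m : ℕ) (hm : m ≤ d)
    (hs : cg d 1 (∑ k ∈ range m, cc k)) : cg d 1 (∑ k ∈ range m, cc (l * d + k)) := by
  obtain ⟨z, hz, hh⟩ := cc_block hd1 h hd l
  have h1 := ev.sum (range m) _ _ (fun k hk => hh k (by simp at hk; omega))
  have h2 := h1.2.2
  rw [← mul_sum] at h2
  have := h2.add (hs.Omul hz)
  simpa using this

lemma blocks (hd1 : 1 < d) (h : ℕ) (hd : d = 2 * h + 1) (l : ℕ) : cg d 1 (∑ k ∈ range (l * d), cc k) := by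
  induction l with
  | zero => simpa using cg_zero
  | succ l ih =>
    rw [Nat.succ_mul, sum_range_add]
    exact ih.add (block_part hd1 h hd l d le_rfl (sum_cc_full hd1 h hd))

lemma blocks_half (hd1 : 1 < d) (h : ℕ) (hd : d = 2 * h + 1) (l : ℕ) : cg d 1 (∑ k ∈ range (l * d + (h + 1)), cc k) := by
  rw [sum_range_add]
  exact (blocks hd1 h hd l).add (block_part hd1 h hd l (h + 1) (by omega) (sum_cc_half hd1 h hd))

lemma sumB (hd1 : 1 < d) (N : ℕ) (hn : d ∣ 2 * N + 1) (M : ℕ) (hM : M = N ∨ M = 2 * N) :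
    cg d 1 (∑ k ∈ range (M + 1), cc k) := by
  obtain ⟨e, he⟩ := hn
  have ho : Odd (d * e) := ⟨N, by omega⟩
  obtain ⟨⟨h, hd⟩, ⟨l, hl⟩⟩ := Nat.odd_mul.1 ho
  rcases hM with rfl | rfl
  · have := blocks_half hd1 h hd l
    rwa [show M + 1 = l * d + (h + 1) by
      have : 2 * M + 1 = d * (2 * l + 1) := by rw [he, hl]
      have e2 : d * (2 * l + 1) = 2 * (l * d) + d := by ring
      omega]
  · have := blocks hd1 h hd e
    rwa [he, mul_comm]

lemma qint_cg (hd1 : 1 < d) (N : ℕ) (hn : d ∣ 2 * N + 1) : cg d 1 (qint (2 * (N : ℤ) + 1)) := by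
  rw [qint_2N, div_eq_mul_inv]
  refine (cg_dvd _ hn).mulO ?_
  have := one_sub_inv_mem d 1 (ndv _ (by omega) (by omega))
  simpa using this

lemma rhsB1 (hd1 : 1 < d) (N K : ℕ) (hn : d ∣ 2 * N + 1) :
    cg d 1 (qint (2 * (N : ℤ) + 1) * yy K ^ 2 *
      (1 + dl N * ∑ i ∈ range N, (-1) ^ i * ww (2 * i + 2))) := by
  obtain ⟨h, hd⟩ : Odd d := Odd.of_dvd_nat ⟨N, rfl⟩ hn
  refine ((qint_cg hd1 N hn).mulO (pow_mem (yy_mem h hd K) 2)).mulO (add_mem (one_mem _) ?_)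
  rw [mul_sum]
  refine sum_mem fun i _ => ?_
  have e : dl N * ((-1) ^ i * ww (2 * i + 2)) = (-1) ^ i * q ^ (2 * i + 2) * (q⁻¹) ^ (2 * N + 1) * ((1 - q ^ (2 * N + 1)) / (1 - q ^ (2 * i + 2))) ^ 2 := by
    unfold dl ww
    rw [← qpc2, inv_pow, div_pow]; ring
  rw [e]
  exact mul_mem (mul_mem (mul_mem (pow_mem (neg_mem (one_mem _)) i) (pow_mem (q_mem d) _)) (pow_mem (qinv_mem d) _))
    (pow_mem (ratio_mem_dvd _ _ hn (by omega)) 2)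

lemma rhsB3 (hd1 : 1 < d) (N : ℕ) (hn : d ∣ 2 * N + 1) :
    cg d 1 (qint (2 * (N : ℤ) + 1) ^ 2 / q ^ N *
    ((∏ j ∈ range N, (1 - q ^ (4 * j + 3))) / ∏ j ∈ range N, (1 - q ^ (4 * j + 5)))) := by
  obtain ⟨h, hd⟩ : Odd d := Odd.of_dvd_nat ⟨N, rfl⟩ hn
  have h1 := P35_mem h hd N (by have := Nat.le_of_dvd (by omega) hn; omega)
  obtain ⟨g, hg, e⟩ := qint_cg hd1 N hn
  refine ⟨g ^ 2 * (q⁻¹) ^ N * ((1 - q ^ d) * ((∏ j ∈ range N, (1 - q ^ (4 * j + 3))) / ∏ j ∈ range N, (1 - q ^ (4 * j + 5)))), ?_, ?_⟩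
  · exact mul_mem (mul_mem (pow_mem hg 2) (pow_mem (qinv_mem d) _)) h1
  · rw [e, inv_pow]; ring
end

lemma tailA (N : ℕ) (hN : 0 < N) [NeZero (2 * N + 1)] (M : ℕ) (hM : M = N ∨ M = 2 * N) (R : RatFunc ℚ)
    (h : cg (2 * N + 1) 5 (∑ k ∈ range (N + 1), cc k - R)) : cg (2 * N + 1) 5 (∑ k ∈ range (M + 1), cc k - R) := by
  rcases hM with rfl | rfl
  · exact h
  · have := (sum_cc_tail (d := 2 * N + 1) (by omega) N rfl).add h
    simpa using this

lemma qcong_refl (f g : RatFunc ℚ) (P : Polynomial ℚ) (h : f = g) : qcong f g P :=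
  ⟨0, 1, isCoprime_one_left, by simp [h]⟩

lemma final1 (K M : ℕ) (hM : M = 2 * K ∨ M = 2 * (2 * K)) :
    qcong (∑ k ∈ range (M + 1), cc k) (qint (2 * ((2 * K : ℕ) : ℤ) + 1) * yy K ^ 2 *
      (1 + dl (2 * K) * ∑ i ∈ range (2 * K), (-1) ^ i * ww (2 * i + 2)))
      ((∑ i ∈ Finset.range (2 * (2 * K) + 1), Polynomial.X ^ i) * Polynomial.cyclotomic (2 * (2 * K) + 1) ℚ ^ 4) := by
  rcases Nat.eq_zero_or_pos K with rfl | hK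
  · apply qcong_refl
    have : M = 0 := by omega
    subst this
    have := one_sub_q
    simp [cc, CC, xx, yy, qint, div_self this]
  apply qcong_of _ (by omega)
  · intro _
    exact tailA (2 * K) (by omega) M hM _ (case1 K hK)
  · intro d hd1 hdn hdv _
    exact (sumB hd1 (2 * K) hdv M hM).sub (rhsB1 hd1 (2 * K) K hdv)

lemma final3 (K M : ℕ) (hM : M = 2 * K + 1 ∨ M = 2 * (2 * K + 1)) :
    qcong (∑ k ∈ range (M + 1), cc k) (qint (2 * ((2 * K + 1 : ℕ) : ℤ) + 1) ^ 2 / q ^ (2 * K + 1) *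
    ((∏ j ∈ range (2 * K + 1), (1 - q ^ (4 * j + 3))) / ∏ j ∈ range (2 * K + 1), (1 - q ^ (4 * j + 5))))
      ((∑ i ∈ Finset.range (2 * (2 * K + 1) + 1), Polynomial.X ^ i) * Polynomial.cyclotomic (2 * (2 * K + 1) + 1) ℚ ^ 4) := by
  apply qcong_of _ (by omega)
  · intro _
    exact tailA (2 * K + 1) (by omega) M hM _ (case3 K)
  · intro d hd1 hdn hdv _
    exact (sumB hd1 (2 * K + 1) hdv M hM).sub (rhsB3 hd1 (2 * K + 1) hdv)

theorem stmt0 (n : ℕ) (hpos : 0 < n) (hodd : Odd n) (M : ℕ)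
    (hM : M = (n - 1) / 2 ∨ M = n - 1) :
    (n % 4 = 1 →
      qcong
        (∑ k ∈ Finset.range (M + 1),
          (-1 : RatFunc ℚ) ^ k * qint (4 * k + 1) *
            (qpoch q (q ^ 2) k ^ 4 * qpoch (q ^ 2) (q ^ 4) k /
              (qpoch (q ^ 2) (q ^ 2) k ^ 4 * qpoch (q ^ 4) (q ^ 4) k)) * q ^ k)
        (qint n *
          (qpoch (q ^ 2) (q ^ 4) ((n - 1) / 4) ^ 2 /
            qpoch (q ^ 4) (q ^ 4) ((n - 1) / 4) ^ 2) *
          (1 + qint n ^ 2 *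
            ∑ j ∈ Finset.Icc 1 ((n - 1) / 2),
              (-1 : RatFunc ℚ) ^ (j + 1) * q ^ (2 * (j : ℤ) - n) / qint (2 * j) ^ 2))
        ((∑ i ∈ Finset.range n, Polynomial.X ^ i) * Polynomial.cyclotomic n ℚ ^ 4)) ∧
    (n % 4 = 3 →
      qcong
        (∑ k ∈ Finset.range (M + 1),
          (-1 : RatFunc ℚ) ^ k * qint (4 * k + 1) *
            (qpoch q (q ^ 2) k ^ 4 * qpoch (q ^ 2) (q ^ 4) k /
              (qpoch (q ^ 2) (q ^ 2) k ^ 4 * qpoch (q ^ 4) (q ^ 4) k)) * q ^ k)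
        (qint n ^ 2 * q ^ ((1 - (n : ℤ)) / 2) *
          (qpoch (q ^ 3) (q ^ 4) ((n - 1) / 2) / qpoch (q ^ 5) (q ^ 4) ((n - 1) / 2)))
        ((∑ i ∈ Finset.range n, Polynomial.X ^ i) * Polynomial.cyclotomic n ℚ ^ 4)) := by
  simp only [summand_eq, yyK_eq]
  constructor
  · intro h4
    obtain ⟨K, hK⟩ : ∃ K, n = 2 * (2 * K) + 1 := ⟨n / 4, by omega⟩
    subst hK
    have h := final1 K M (by omega)
    rw [show (2 * (2 * K) + 1 - 1) / 4 = K by omega, show (2 * (2 * K) + 1 - 1) / 2 = 2 * K by omega]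
    have e : ((2 * (2 * K) + 1 : ℕ) : ℤ) = 2 * ((2 * K : ℕ) : ℤ) + 1 := by push_cast; ring
    rw [e, rhs1]
    exact h
  · intro h4
    obtain ⟨K, hK⟩ : ∃ K, n = 2 * (2 * K + 1) + 1 := ⟨n / 4, by omega⟩
    subst hK
    have h := final3 K M (by omega)
    rw [show (2 * (2 * K + 1) + 1 - 1) / 2 = 2 * K + 1 by omega]
    have e : ((2 * (2 * K + 1) + 1 : ℕ) : ℤ) = 2 * ((2 * K + 1 : ℕ) : ℤ) + 1 := by push_cast; ring
    have e1 : (1 - ((2 * (2 * K + 1) + 1 : ℕ) : ℤ)) / 2 = -((2 * K + 1 : ℕ) : ℤ) := by omega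
    rw [e1, e, zpow_neg, zpow_natCast, ← div_eq_mul_inv]
    have e3 : qpoch (q ^ 3) (q ^ 4) (2 * K + 1) = ∏ j ∈ range (2 * K + 1), (1 - q ^ (4 * j + 3)) := by
      unfold qpoch; apply prod_congr rfl; intro j _; ring
    have e5 : qpoch (q ^ 5) (q ^ 4) (2 * K + 1) = ∏ j ∈ range (2 * K + 1), (1 - q ^ (4 * j + 5)) := by
      unfold qpoch; apply prod_congr rfl; intro j _; ring
    rw [e3, e5]
    exact h
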